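/- For every constant p ∈ (1,2), every set X of n points in ℓ_p space, and every sufficiently large t > 1, there exists an O(t)-spanner for X with lightness O((t^{1+p}/log² t)·n^{(log² t)/t^p}·log n) and with O(n^{1+(log² t)/t^p}·log n·log t) edges. -/

import Mathlib

open MeasureTheory

noncomputable section

/-- The distance function on unordered pairs of points. -/
def symDist {X : Type*} [MetricSpace X] : Sym2 X → ℝ :=
  Sym2.lift ⟨fun a b => dist a b, fun a b => dist_comm a b⟩

/-- The weight of a walk: the sum of the metric distances along its edges. -/
def walkWeight {X : Type*} [MetricSpace X] {G : SimpleGraph X} {u v : X}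
    (p : G.Walk u v) : ℝ :=
  (p.edges.map symDist).sum

/-- Shortest-path distance in a graph whose edges are weighted by the metric. -/
def spannerDist {X : Type*} [MetricSpace X] (G : SimpleGraph X) (u v : X) : ℝ :=
  sInf {c | ∃ p : G.Walk u v, walkWeight p = c}

/-- `G` is a `t`-spanner of the metric space `X`. -/
def IsSpanner {X : Type*} [MetricSpace X] (G : SimpleGraph X) (t : ℝ) : Prop :=
  ∀ u v : X, dist u v ≤ spannerDist G u v ∧ spannerDist G u v ≤ t * dist u v

/-- Total weight of a graph over a finite metric space. -/
def graphWeight {X : Type*} [MetricSpace X] [Fintype X] (G : SimpleGraph X) : ℝ :=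
  ∑ e ∈ G.edgeSet.toFinite.toFinset, symDist e

/-- Number of edges of a graph. -/
def edgeCount {X : Type*} (G : SimpleGraph X) : ℕ :=
  Nat.card G.edgeSet

/-- Weight of a minimum spanning tree of a finite metric space: the minimum total
weight of a connected graph on `X`. -/
def mstWeight (X : Type*) [MetricSpace X] [Fintype X] : ℝ :=
  sInf {c | ∃ G : SimpleGraph X, G.Connected ∧ graphWeight G = c}

/-- `D` is a `(t, Δ, δ)`-decomposition of the metric space `X`. -/
def IsDecomposition {X : Type*} [MetricSpace X] (t Δ δ : ℝ) (D : PMF (Setoid X)) : Prop :=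
  (∀ P ∈ D.support, ∀ x y : X, P.r x y → dist x y ≤ t * Δ) ∧
  (∀ x y : X, dist x y ≤ Δ → ENNReal.ofReal δ ≤ D.toOuterMeasure {P | P.r x y})

/-- A metric space `X` is `(t, δ)`-decomposable. -/
def IsDecomposable (X : Type*) [MetricSpace X] (t δ : ℝ) : Prop :=
  ∀ Δ : ℝ, 0 < Δ → ∃ D : PMF (Setoid X), IsDecomposition t Δ δ D

/-- `X` has doubling constant `lam`. -/
def HasDoublingConstant (X : Type*) [MetricSpace X] (lam : ℕ) : Prop :=
  ∀ (x : X) (r : ℝ), 0 < r → ∃ F : Finset X, F.card ≤ lam ∧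
    Metric.closedBall x (2 * r) ⊆ ⋃ y ∈ F, Metric.closedBall y r

/-- Weight of a walk in a weighted graph. -/
def wWalkWeight {V : Type*} {G : SimpleGraph V} (w : Sym2 V → ℝ) {u v : V}
    (p : G.Walk u v) : ℝ :=
  (p.edges.map w).sum

/-- Shortest-path distance in a weighted graph. -/
def wDist {V : Type*} (G : SimpleGraph V) (w : Sym2 V → ℝ) (u v : V) : ℝ :=
  sInf {c | ∃ p : G.Walk u v, wWalkWeight w p = c}

/-- Total edge weight of a weighted graph. -/
def wGraphWeight {V : Type*} [Fintype V] (G : SimpleGraph V) (w : Sym2 V → ℝ) : ℝ :=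
  ∑ e ∈ G.edgeSet.toFinite.toFinset, w e

/-- Weight of a minimum spanning tree of a weighted graph `G`: the least total weight
of a connected spanning subgraph of `G`. -/
def wMstWeight {V : Type*} [Fintype V] (G : SimpleGraph V) (w : Sym2 V → ℝ) : ℝ :=
  sInf {c | ∃ T : SimpleGraph V, T ≤ G ∧ T.Connected ∧ wGraphWeight T w = c}

/-- The setoid of elements lying on the same cycle of a permutation. -/
def sameCycleSetoid {α : Type*} (σ : Equiv.Perm α) : Setoid α :=
  ⟨σ.SameCycle, ⟨fun x => Equiv.Perm.SameCycle.refl σ x,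
    fun h => h.symm, fun h₁ h₂ => h₁.trans h₂⟩⟩

/-- The number of cycles (orbits) of a permutation. -/
def numCycles {α : Type*} (σ : Equiv.Perm α) : ℕ :=
  Nat.card (Quotient (sameCycleSetoid σ))

/-- The dart-reversal permutation of a graph. -/
def dartReversal {V : Type*} (G : SimpleGraph V) : Equiv.Perm G.Dart :=
  Function.Involutive.toPerm SimpleGraph.Dart.symm SimpleGraph.Dart.symm_involutive

/-- `σ` is a rotation system of `G`: it permutes darts, preserves tails, and is a single
cycle on the darts emanating from each fixed vertex. -/
def IsRotationSystem {V : Type*} (G : SimpleGraph V) (σ : Equiv.Perm G.Dart) : Prop :=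
  (∀ d : G.Dart, (σ d).toProd.1 = d.toProd.1) ∧
  (∀ d e : G.Dart, d.toProd.1 = e.toProd.1 → σ.SameCycle d e)

/-- `G` has (orientable) genus at most `g`: some rotation system, whose number of faces
is the number of cycles of the face permutation `σ * dartReversal G`, satisfies Euler's
formula `V - E + F ≥ 2 - 2g`. -/
def GenusLE {V : Type*} [Fintype V] (G : SimpleGraph V) (g : ℕ) : Prop :=
  ∃ σ : Equiv.Perm G.Dart, IsRotationSystem G σ ∧
    (2 : ℤ) - 2 * (g : ℤ) ≤
      (Fintype.card V : ℤ) - (Nat.card G.edgeSet : ℤ) + (numCycles (σ * dartReversal G) : ℤ)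

/-- `D` is a `(t, Δ, δ)`-strong-decomposition of the weighted graph `(G, w)`: clusters
have strong diameter at most `t·Δ`, and pairs at distance at most `Δ` are clustered
together with probability at least `δ`. -/
def IsStrongDecomposition {V : Type*} (G : SimpleGraph V) (w : Sym2 V → ℝ)
    (t Δ δ : ℝ) (D : PMF (Setoid V)) : Prop :=
  (∀ P ∈ D.support, ∀ u v : V, P.r u v →
      ∃ p : G.Walk u v, (∀ z ∈ p.support, P.r u z) ∧ wWalkWeight w p ≤ t * Δ) ∧
  (∀ u v : V, wDist G w u v ≤ Δ → ENNReal.ofReal δ ≤ D.toOuterMeasure {P | P.r u v})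

/-- A weighted graph is `(t, δ)`-strongly-decomposable. -/
def IsStronglyDecomposable {V : Type*} (G : SimpleGraph V) (w : Sym2 V → ℝ)
    (t δ : ℝ) : Prop :=
  ∀ Δ : ℝ, 0 < Δ → ∃ D : PMF (Setoid V), IsStrongDecomposition G w t Δ δ D

/-- `D` is an `(r, cr, p₁, p₂)`-sensitive LSH family for `X`. -/
def IsLSHFamily {X : Type*} {U : Type*} [MetricSpace X] (D : PMF (X → U))
    (r cr p₁ p₂ : ℝ) : Prop :=
  (∀ x y : X, dist x y ≤ r → ENNReal.ofReal p₁ ≤ D.toOuterMeasure {h | h x = h y}) ∧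
  (∀ x y : X, cr < dist x y → D.toOuterMeasure {h | h x = h y} ≤ ENNReal.ofReal p₂)

end


/-- one-dimensional snowflake sum, upper bound -/
lemma snow_upper (p : ℝ) (hp1 : 1 < p) (hp2 : p < 2) :
    ∃ C : ℝ, 0 < C ∧ ∀ (K : Finset ℤ) (d : ℝ),
      ∑ k ∈ K, (2:ℝ) ^ (-(k:ℝ) * p) * (2 - 2 * Real.cos (2 ^ (k:ℝ) * d)) ≤ C * |d| ^ p := by
  set q : ℝ := (2:ℝ) ^ (-(2 - p)) with hq
  set r : ℝ := (2:ℝ) ^ (-p) with hr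
  have hq0 : 0 < q := by positivity
  have hr0 : 0 < r := by positivity
  have hq1 : q < 1 := by
    rw [hq]; exact Real.rpow_lt_one_of_one_lt_of_neg (by norm_num) (by linarith)
  have hr1 : r < 1 := by
    rw [hr]; exact Real.rpow_lt_one_of_one_lt_of_neg (by norm_num) (by linarith)
  let a : ℤ → ℝ := fun j => 4 * (if j ≤ 0 then q ^ (j.natAbs) else r ^ (j.natAbs - 1))
  have ha0 : ∀ j, 0 ≤ a j := by intro j; simp only [a]; split_ifs <;> positivity
  have hsum : Summable a := by
    apply Summable.of_nat_of_neg_add_one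
    · rw [← summable_nat_add_iff 1]
      have : (fun n : ℕ => a ((n + 1 : ℕ) : ℤ)) = fun n => 4 * r ^ n := by
        funext n
        simp only [a]
        rw [if_neg (by omega)]
        congr 2
      rw [this]
      exact (summable_geometric_of_lt_one hr0.le hr1).mul_left 4
    · have : (fun n : ℕ => a (-((n:ℤ) + 1))) = fun n => (4 * q) * q ^ n := by
        funext n
        simp only [a]
        rw [if_pos (by omega)]
        have : (-((n:ℤ)+1)).natAbs = n + 1 := by omega
        rw [this]; ring
      rw [this]
      exact (summable_geometric_of_lt_one hq0.le hq1).mul_left _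
  refine ⟨∑' j, a j, ?_, ?_⟩
  · apply hsum.tsum_pos ha0 0
    simp [a]
  intro K d
  rcases eq_or_ne d 0 with rfl | hd
  · simp [Real.zero_rpow (by linarith : p ≠ 0)]
  have hd' : 0 < |d| := abs_pos.mpr hd
  obtain ⟨k0, hk1, hk2⟩ := exists_mem_Ico_zpow (x := |d|⁻¹) (y := (2:ℝ)) (by positivity) (by norm_num)
  have hk1' : (2:ℝ) ^ (k0:ℝ) * |d| ≤ 1 := by
    rw [Real.rpow_intCast]
    calc _ ≤ |d|⁻¹ * |d| := by gcongr
      _ = 1 := by field_simp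
  have hk2' : 1 ≤ (2:ℝ) ^ (k0 + 1:ℝ) * |d| := by
    have : (2:ℝ) ^ (k0 + 1:ℝ) = 2 ^ (k0+1) := by rw [← Real.rpow_intCast]; push_cast; rfl
    rw [this]
    calc 1 = |d|⁻¹ * |d| := by field_simp
      _ ≤ _ := by gcongr
  have key : ∀ k : ℤ, (2:ℝ) ^ (-(k:ℝ) * p) * (2 - 2 * Real.cos (2 ^ (k:ℝ) * d)) ≤ a (k - k0) * |d| ^ p := by
    intro k
    simp only [a]
    split_ifs with h
    · have hc := Real.one_sub_sq_div_two_le_cos (x := 2 ^ (k:ℝ) * d)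
      have e1 : q ^ (k - k0).natAbs = (2:ℝ) ^ (((k:ℝ) - k0) * (2 - p)) := by
        rw [hq, ← Real.rpow_natCast, ← Real.rpow_mul (by norm_num)]
        congr 1
        have : (((k - k0).natAbs : ℕ) : ℝ) = -((k:ℝ) - k0) := by
          have h2 : (((k - k0).natAbs : ℕ) : ℤ) = -(k - k0) := by omega
          have := congrArg (fun z : ℤ => (z:ℝ)) h2
          push_cast at this
          simpa using this
        rw [this]; ring
      have e2 : (2:ℝ) ^ (-(k:ℝ) * p) * (2 ^ (k:ℝ) * |d|) ^ 2
          = (2:ℝ) ^ (((k:ℝ) - k0) * (2 - p)) * ((2 ^ (k0:ℝ) * |d|) ^ (2 - p)) * |d| ^ p := by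
        rw [Real.mul_rpow (by positivity) (by positivity), mul_pow]
        rw [← Real.rpow_mul (by norm_num), ← Real.rpow_natCast, ← Real.rpow_natCast, ← Real.rpow_mul (by norm_num)]
        calc _ = ((2:ℝ) ^ (-(k:ℝ) * p) * 2 ^ ((k:ℝ) * (2:ℕ))) * |d| ^ (((2:ℕ):ℝ)) := by ring
          _ = (((2:ℝ) ^ (((k:ℝ) - k0) * (2 - p))) * (2 ^ ((k0:ℝ) * (2 - p)))) * (|d| ^ (2 - p) * |d| ^ p) := by
            rw [← Real.rpow_add (by norm_num), ← Real.rpow_add (by norm_num), ← Real.rpow_add hd']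
            congr 2
            · push_cast; ring
            · push_cast; ring
          _ = _ := by ring
      have e3 : ((2 ^ (k0:ℝ) * |d|) ^ (2 - p)) ≤ 1 :=
        Real.rpow_le_one (by positivity) hk1' (by linarith)
      calc _ ≤ (2:ℝ) ^ (-(k:ℝ) * p) * (2 ^ (k:ℝ) * |d|) ^ 2 := by
            gcongr
            have : (2 ^ (k:ℝ) * |d|) ^ 2 = (2 ^ (k:ℝ) * d) ^ 2 := by rw [mul_pow, mul_pow, sq_abs]
            rw [this]; linarith
        _ = _ := e2
        _ ≤ (2:ℝ) ^ (((k:ℝ) - k0) * (2 - p)) * 1 * |d| ^ p := by gcongr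
        _ ≤ _ := by
          rw [e1, mul_one]; gcongr
          have : 0 < (2:ℝ) ^ (((k:ℝ) - k0) * (2 - p)) := by positivity
          linarith
    · have e1 : r ^ ((k - k0).natAbs - 1) = (2:ℝ) ^ (-((k:ℝ) - k0 - 1) * p) := by
        rw [hr, ← Real.rpow_natCast, ← Real.rpow_mul (by norm_num)]
        congr 1
        have : (((k - k0).natAbs - 1 : ℕ) : ℝ) = ((k:ℝ) - k0 - 1) := by
          have h2 : (((k - k0).natAbs - 1 : ℕ) : ℤ) = (k - k0 - 1) := by omega
          have := congrArg (fun z : ℤ => (z:ℝ)) h2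
          push_cast at this
          simpa using this
        rw [this]; ring
      have e3 : 1 ≤ ((2:ℝ) ^ (k0 + 1:ℝ) * |d|) ^ p := Real.one_le_rpow hk2' (by linarith)
      have hc := Real.neg_one_le_cos (2 ^ (k:ℝ) * d)
      calc _ ≤ (2:ℝ) ^ (-(k:ℝ) * p) * 4 := by gcongr; linarith
        _ ≤ (2:ℝ) ^ (-(k:ℝ) * p) * 4 * ((2:ℝ) ^ (k0 + 1:ℝ) * |d|) ^ p := le_mul_of_one_le_right (by positivity) e3
        _ = 4 * (2 ^ (-(k:ℝ) * p) * 2 ^ ((k0 + 1 : ℝ) * p)) * |d| ^ p := by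
          rw [Real.mul_rpow (by positivity) (by positivity), ← Real.rpow_mul (by norm_num)]; ring
        _ = _ := by
          rw [← Real.rpow_add (by norm_num), e1]
          congr 3; ring
  calc _ ≤ ∑ k ∈ K, a (k - k0) * |d| ^ p := Finset.sum_le_sum fun k _ => key k
    _ = (∑ k ∈ K, a (k - k0)) * |d| ^ p := by rw [Finset.sum_mul]
    _ ≤ _ := by
      gcongr
      have : ∑ k ∈ K, a (k - k0) = ∑ k ∈ K.map (Equiv.subRight k0).toEmbedding, a k := by
        simp
      rw [this]
      exact hsum.sum_le_tsum _ (fun j _ => ha0 j)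

lemma snow_lower (p : ℝ) (hp1 : 1 < p) (d : ℝ) :
    ∃ k : ℤ, ∀ K : Finset ℤ, k ∈ K →
      (1/16) * |d| ^ p ≤ ∑ k ∈ K, (2:ℝ) ^ (-(k:ℝ) * p) * (2 - 2 * Real.cos (2 ^ (k:ℝ) * d)) := by
  rcases eq_or_ne d 0 with rfl | hd
  · exact ⟨0, fun K _ => by simp [Real.zero_rpow (by linarith : p ≠ 0)]⟩
  have hd' : 0 < |d| := abs_pos.mpr hd
  obtain ⟨k0, hk1, hk2⟩ := exists_mem_Ico_zpow (x := |d|⁻¹) (y := (2:ℝ)) (by positivity) (by norm_num)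
  have hk1' : (2:ℝ) ^ (k0:ℝ) * |d| ≤ 1 := by
    rw [Real.rpow_intCast]
    calc _ ≤ |d|⁻¹ * |d| := by gcongr
      _ = 1 := by field_simp
  have hk2' : 1/2 ≤ (2:ℝ) ^ (k0:ℝ) * |d| := by
    have : (2:ℝ) ^ (k0+1) = 2 * (2:ℝ) ^ (k0:ℝ) := by
      rw [zpow_add_one₀ (by norm_num), Real.rpow_intCast]; ring
    rw [this] at hk2
    have : 1 ≤ 2 * (2:ℝ) ^ (k0:ℝ) * |d| := by
      calc 1 = |d|⁻¹ * |d| := by field_simp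
        _ ≤ _ := by gcongr
    linarith
  refine ⟨k0, fun K hK => ?_⟩
  refine le_trans ?_ (Finset.single_le_sum (f := fun k : ℤ => (2:ℝ) ^ (-(k:ℝ) * p) * (2 - 2 * Real.cos (2 ^ (k:ℝ) * d))) (fun k _ => ?_) hK)
  · have hc := Real.cos_le_one_sub_mul_cos_sq (x := 2 ^ (k0:ℝ) * d) (by
      rw [abs_mul, abs_of_pos (by positivity : (0:ℝ) < 2 ^ (k0:ℝ))]; linarith [Real.pi_gt_three])
    have e : (2 ^ (k0:ℝ) * d) ^ 2 = (2 ^ (k0:ℝ) * |d|) ^ 2 := by rw [mul_pow, mul_pow, sq_abs]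
    rw [e] at hc
    have h4 : (1/4:ℝ) ≤ (2 ^ (k0:ℝ) * |d|) ^ 2 := by nlinarith
    have hpi : (1/8:ℝ) ≤ 2 / Real.pi ^ 2 := by
      rw [div_le_div_iff₀ (by norm_num) (by positivity)]
      nlinarith [Real.pi_lt_four, Real.pi_pos]
    have h5 : (1/16:ℝ) ≤ 2 - 2 * Real.cos (2 ^ (k0:ℝ) * d) := by nlinarith
    have h6 : |d| ^ p ≤ (2:ℝ) ^ (-(k0:ℝ) * p) := by
      rw [Real.rpow_mul (by norm_num)]
      apply Real.rpow_le_rpow (by positivity) _ (by linarith)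
      rw [Real.rpow_neg (by norm_num)]
      rw [le_inv_comm₀ hd' (by positivity), Real.rpow_intCast]; exact hk1
    calc _ ≤ (1/16) * (2:ℝ) ^ (-(k0:ℝ) * p) := by gcongr
      _ ≤ _ := by rw [mul_comm]; gcongr
  · have := Real.cos_le_one (2 ^ (k:ℝ) * d)
    apply mul_nonneg (by positivity); linarith

lemma lp_embed (p : ℝ) (hp1 : 1 < p) (hp2 : p < 2) [Fact (1 ≤ ENNReal.ofReal p)] :
    ∃ C : ℝ, 0 < C ∧ ∀ s : Finset (lp (fun _ : ℕ => ℝ) (ENNReal.ofReal p)),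
      ∃ (ι : Type) (_ : Fintype ι) (Φ : ↥s → ι → ℝ), ∀ x y : ↥s,
        (1/32) * dist x y ^ p ≤ ∑ i, (Φ x i - Φ y i) ^ 2 ∧
        ∑ i, (Φ x i - Φ y i) ^ 2 ≤ C * dist x y ^ p := by
  obtain ⟨C, hC, hup⟩ := snow_upper p hp1 hp2
  refine ⟨C, hC, fun s => ?_⟩
  have hpr : (ENNReal.ofReal p).toReal = p := ENNReal.toReal_ofReal (by linarith)
  have hsum : ∀ x y : ↥s, HasSum (fun i => |x.1 i - y.1 i| ^ p) (dist x y ^ p) := by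
    intro x y
    have := lp.hasSum_norm (by rw [hpr]; linarith) (x.1 - y.1)
    rw [hpr] at this
    simpa [Subtype.dist_eq, dist_eq_norm] using this
  have hN : ∃ N : ℕ, ∀ x y : ↥s, (1/2) * dist x y ^ p ≤ ∑ i ∈ Finset.range N, |x.1 i - y.1 i| ^ p := by
    have : ∀ᶠ N in Filter.atTop, ∀ x y : ↥s, (1/2) * dist x y ^ p ≤ ∑ i ∈ Finset.range N, |x.1 i - y.1 i| ^ p := by
      rw [Filter.eventually_all]; intro x
      rw [Filter.eventually_all]; intro y
      rcases eq_or_ne x y with rfl | hxy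
      · simp [Real.zero_rpow (by linarith : p ≠ 0)]
      · have hpos : 0 < dist x y ^ p := Real.rpow_pos_of_pos (dist_pos.mpr hxy) _
        have := (hsum x y).tendsto_sum_nat.eventually (lt_mem_nhds (show (1/2) * dist x y ^ p < dist x y ^ p by linarith))
        exact this.mono fun _ h => h.le
    exact this.exists
  obtain ⟨N, hN⟩ := hN
  choose kk hkk using fun d => snow_lower p hp1 d
  classical
  let K : Finset ℤ := Finset.univ.image (fun q : (↥s × ↥s) × Fin N => kk (q.1.1.1 q.2 - q.1.2.1 q.2))
  let Φ : ↥s → (Fin N × K) × Bool → ℝ := fun x i =>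
    (2:ℝ) ^ (-((i.1.2.1 : ℤ):ℝ) * p / 2) *
      (if i.2 then Real.cos (2 ^ ((i.1.2.1 : ℤ):ℝ) * x.1 i.1.1) else Real.sin (2 ^ ((i.1.2.1 : ℤ):ℝ) * x.1 i.1.1))
  refine ⟨(Fin N × K) × Bool, inferInstance, Φ, fun x y => ?_⟩
  have hΦ : ∑ i, (Φ x i - Φ y i) ^ 2 = ∑ i ∈ Finset.range N, ∑ k ∈ K,
      (2:ℝ) ^ (-(k:ℝ) * p) * (2 - 2 * Real.cos (2 ^ (k:ℝ) * (x.1 i - y.1 i))) := by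
    rw [Fintype.sum_prod_type, Fintype.sum_prod_type, ← Fin.sum_univ_eq_sum_range (fun i => ∑ k ∈ K,
      (2:ℝ) ^ (-(k:ℝ) * p) * (2 - 2 * Real.cos (2 ^ (k:ℝ) * (x.1 i - y.1 i))))]
    apply Finset.sum_congr rfl
    intro i _
    rw [← Finset.sum_coe_sort K]
    apply Finset.sum_congr rfl
    intro k _
    rw [Fintype.sum_bool]
    simp only [Φ, if_true]
    have e : (2:ℝ) ^ (-((k.1:ℤ):ℝ) * p) = ((2:ℝ) ^ (-((k.1:ℤ):ℝ) * p / 2)) ^ 2 := by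
      rw [← Real.rpow_natCast, ← Real.rpow_mul (by norm_num)]; congr 1; push_cast; ring
    rw [e, mul_sub ((2:ℝ) ^ ((k.1:ℤ):ℝ)), Real.cos_sub]
    set a := (2:ℝ) ^ ((k.1:ℤ):ℝ) * x.1 i
    set b := (2:ℝ) ^ ((k.1:ℤ):ℝ) * y.1 i
    have h1 := Real.sin_sq_add_cos_sq a
    have h2 := Real.sin_sq_add_cos_sq b
    simp only [Bool.false_eq_true, if_false]
    linear_combination ((2:ℝ) ^ (-((k.1:ℤ):ℝ) * p / 2)) ^ 2 * (h1 + h2)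
  rw [hΦ]
  constructor
  · calc (1/32) * dist x y ^ p = (1/16) * ((1/2) * dist x y ^ p) := by ring
      _ ≤ (1/16) * ∑ i ∈ Finset.range N, |x.1 i - y.1 i| ^ p := by gcongr; exact hN x y
      _ = ∑ i ∈ Finset.range N, (1/16) * |x.1 i - y.1 i| ^ p := by rw [Finset.mul_sum]
      _ ≤ _ := by
        apply Finset.sum_le_sum
        intro i hi
        apply hkk
        simp only [K, Finset.mem_image, Finset.mem_univ, true_and]
        exact ⟨((x, y), ⟨i, Finset.mem_range.mp hi⟩), rfl⟩
  · calc _ ≤ ∑ i ∈ Finset.range N, C * |x.1 i - y.1 i| ^ p := Finset.sum_le_sum fun i _ => hup K _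
      _ = C * ∑ i ∈ Finset.range N, |x.1 i - y.1 i| ^ p := by rw [Finset.mul_sum]
      _ ≤ _ := by
        gcongr
        exact sum_le_hasSum _ (fun i _ => by positivity) (hsum x y)

lemma exp_le_cos (d : ℝ) (h : |d| ≤ 1) : Real.exp (-d ^ 2) ≤ Real.cos d := by
  have h1 := Real.one_sub_sq_div_two_le_cos (x := d)
  have hu : d ^ 2 ≤ 1 := by rw [← sq_abs]; nlinarith [abs_nonneg d]
  have hu0 := sq_nonneg d
  have h2 : Real.exp (-d ^ 2) ≤ 1 / (1 + d ^ 2) := by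
    rw [Real.exp_neg, ← one_div]
    gcongr
    linarith [Real.add_one_le_exp (d ^ 2)]
  have h3 : 1 / (1 + d ^ 2) ≤ 1 - d ^ 2 / 2 := by
    rw [div_le_iff₀ (by positivity)]; nlinarith
  linarith

lemma cos_le_exp (d : ℝ) (h : |d| ≤ 1) : Real.cos d ≤ Real.exp (-(1/8) * d ^ 2) := by
  have h1 := Real.cos_le_one_sub_mul_cos_sq (x := d) (by linarith [Real.pi_gt_three])
  have hpi : (1/8:ℝ) ≤ 2 / Real.pi ^ 2 := by
    rw [div_le_div_iff₀ (by norm_num) (by positivity)]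
    nlinarith [Real.pi_lt_four, Real.pi_pos]
  have := Real.add_one_le_exp (-(1/8) * d ^ 2)
  nlinarith [sq_nonneg d]

lemma angle_family {X ι : Type} [Fintype ι] (ψ : X → ι → ℝ) (hψ : ∀ x i, |ψ x i| ≤ 1/2) :
    ∃ (Ω : Type) (_ : Fintype Ω) (g : X → Ω → ℝ), (∀ x ω, 0 ≤ g x ω) ∧ (∀ x, ∑ ω, g x ω ^ 2 = 1) ∧
      ∀ x y, Real.exp (-∑ i, (ψ x i - ψ y i) ^ 2) ≤ ∑ ω, g x ω * g y ω ∧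
        ∑ ω, g x ω * g y ω ≤ Real.exp (-(1/8) * ∑ i, (ψ x i - ψ y i) ^ 2) := by
  classical
  let G : X → ι → Bool → ℝ := fun x i b =>
    if b then Real.cos (Real.pi / 4 + ψ x i) else Real.sin (Real.pi / 4 + ψ x i)
  have hpi := Real.pi_gt_three
  have hG : ∀ x i b, 0 ≤ G x i b := by
    intro x i b
    have := abs_le.mp (hψ x i)
    simp only [G]
    split_ifs
    · apply Real.cos_nonneg_of_mem_Icc; constructor <;> linarith
    · apply Real.sin_nonneg_of_mem_Icc; constructor <;> linarith
  have hH : ∀ x y, ∑ ω : ι → Bool, (∏ i, G x i (ω i)) * (∏ i, G y i (ω i)) = ∏ i, Real.cos (ψ x i - ψ y i) := by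
    intro x y
    simp_rw [← Finset.prod_mul_distrib]
    rw [← Fintype.prod_sum (fun i b => G x i b * G y i b)]
    apply Finset.prod_congr rfl
    intro i _
    rw [Fintype.sum_bool]
    simp only [G, if_true, Bool.false_eq_true, if_false]
    rw [← Real.cos_sub]; congr 1; ring
  refine ⟨ι → Bool, inferInstance, fun x ω => ∏ i, G x i (ω i), fun x ω => Finset.prod_nonneg fun i _ => hG _ _ _, ?_, ?_⟩
  · intro x
    have := hH x x
    simp only [sub_self, Real.cos_zero, Finset.prod_const_one] at this
    simpa [sq] using this
  · intro x y
    rw [hH]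
    have hd : ∀ i, |ψ x i - ψ y i| ≤ 1 := fun i => by
      have := abs_sub (ψ x i) (ψ y i)
      linarith [hψ x i, hψ y i]
    constructor
    · rw [← Finset.sum_neg_distrib, Real.exp_sum]
      exact Finset.prod_le_prod (fun _ _ => (Real.exp_pos _).le) fun i _ => exp_le_cos _ (hd i)
    · rw [Finset.mul_sum, Real.exp_sum]
      exact Finset.prod_le_prod (fun i _ => le_trans (Real.exp_pos _).le (exp_le_cos _ (hd i))) fun i _ => cos_le_exp _ (hd i)

lemma angle_family' {X ι : Type} [Fintype X] [Fintype ι] (ψ : X → ι → ℝ) :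
    ∃ (Ω : Type) (_ : Fintype Ω) (g : X → Ω → ℝ), (∀ x ω, 0 ≤ g x ω) ∧ (∀ x, ∑ ω, g x ω ^ 2 = 1) ∧
      ∀ x y, Real.exp (-∑ i, (ψ x i - ψ y i) ^ 2) ≤ ∑ ω, g x ω * g y ω ∧
        ∑ ω, g x ω * g y ω ≤ Real.exp (-(1/8) * ∑ i, (ψ x i - ψ y i) ^ 2) := by
  obtain ⟨B, hB⟩ : ∃ B : ℝ, ∀ x i, |ψ x i| ≤ B := by
    obtain ⟨B, hB⟩ := (Set.finite_range (fun q : X × ι => |ψ q.1 q.2|)).bddAbove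
    exact ⟨B, fun x i => hB ⟨(x, i), rfl⟩⟩
  obtain ⟨m, hm⟩ := exists_nat_gt (2 * |B|)
  have hm0 : (0:ℝ) < m := lt_of_le_of_lt (by positivity) hm
  have key := angle_family (X := X) (ι := ι × Fin (m ^ 2)) (fun x i => ψ x i.1 / m) (by
    intro x i
    rw [abs_div, abs_of_pos hm0, div_le_iff₀ hm0]
    linarith [hB x i.1, le_abs_self B])
  have e : ∀ x y, ∑ i : ι × Fin (m ^ 2), (ψ x i.1 / m - ψ y i.1 / m) ^ 2 = ∑ i, (ψ x i - ψ y i) ^ 2 := by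
    intro x y
    rw [Fintype.sum_prod_type]
    apply Finset.sum_congr rfl
    intro i _
    simp
    field_simp
  simp only [e] at key
  exact key

lemma lp_affinity (p : ℝ) (hp1 : 1 < p) (hp2 : p < 2) [Fact (1 ≤ ENNReal.ofReal p)] :
    ∃ A : ℝ, 0 < A ∧ ∀ s : Finset (lp (fun _ : ℕ => ℝ) (ENNReal.ofReal p)), ∀ μ : ℝ, 0 < μ →
      ∃ (Ω : Type) (_ : Fintype Ω) (g : ↥s → Ω → ℝ), (∀ x ω, 0 ≤ g x ω) ∧
        (∀ x, ∑ ω, g x ω ^ 2 = 1) ∧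
        ∀ x y, Real.exp (-(A * μ * dist x y ^ p)) ≤ ∑ ω, g x ω * g y ω ∧
          ∑ ω, g x ω * g y ω ≤ Real.exp (-(μ * dist x y ^ p)) := by
  obtain ⟨C, hC, hemb⟩ := lp_embed p hp1 hp2
  refine ⟨256 * C, by positivity, fun s μ hμ => ?_⟩
  obtain ⟨ι, _, Φ, hΦ⟩ := hemb s
  obtain ⟨Ω, hΩ, g, h1, h2, h3⟩ := angle_family' (fun x i => Real.sqrt (256 * μ) * Φ x i)
  have e : ∀ x y, ∑ i, (Real.sqrt (256 * μ) * Φ x i - Real.sqrt (256 * μ) * Φ y i) ^ 2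
      = 256 * μ * ∑ i, (Φ x i - Φ y i) ^ 2 := by
    intro x y
    rw [Finset.mul_sum]
    apply Finset.sum_congr rfl
    intro i _
    rw [← mul_sub, mul_pow, Real.sq_sqrt (by positivity)]
  simp only [e] at h3
  refine ⟨Ω, hΩ, g, h1, h2, fun x y => ⟨le_trans ?_ (h3 x y).1, le_trans (h3 x y).2 ?_⟩⟩
  · apply Real.exp_le_exp.mpr
    have := (hΦ x y).2
    nlinarith
  · apply Real.exp_le_exp.mpr
    have := (hΦ x y).1
    nlinarith

lemma layer_integral (a : ℝ) (h0 : 0 ≤ a) (h1 : a ≤ 1) :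
    ∫ u in (0:ℝ)..1, (Set.Iic a).indicator (fun _ => (1:ℝ)) u = a := by
  rw [intervalIntegral.integral_of_le (by norm_num), MeasureTheory.integral_indicator measurableSet_Iic,
    MeasureTheory.Measure.restrict_restrict measurableSet_Iic]
  have : Set.Iic a ∩ Set.Ioc 0 1 = Set.Ioc 0 a := by
    ext u; simp only [Set.mem_inter_iff, Set.mem_Iic, Set.mem_Ioc]
    constructor
    · rintro ⟨h, h', _⟩; exact ⟨h', h⟩
    · rintro ⟨h, h'⟩; exact ⟨h', h, h'.trans h1⟩
  rw [this]
  simp [h0]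

lemma layer_integrable (a : ℝ) :
    IntervalIntegrable ((Set.Iic a).indicator (fun _ => (1:ℝ))) MeasureTheory.volume 0 1 := by
  rw [intervalIntegrable_iff]
  apply MeasureTheory.Integrable.indicator _ measurableSet_Iic
  simp

/-- `F` is integrable on `[0,1]` with integral `v` -/
def RepInt (F : ℝ → ℝ) (v : ℝ) : Prop :=
  IntervalIntegrable F MeasureTheory.volume 0 1 ∧ ∫ u in (0:ℝ)..1, F u = v

lemma RepInt.base (a : ℝ) (h0 : 0 ≤ a) (h1 : a ≤ 1) :
    RepInt (fun u => if u ≤ a then (1:ℝ) else 0) a := by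
  have : (fun u => if u ≤ a then (1:ℝ) else 0) = (Set.Iic a).indicator (fun _ => (1:ℝ)) := by
    funext u; simp [Set.indicator_apply]
  rw [this]
  exact ⟨layer_integrable a, layer_integral a h0 h1⟩

lemma RepInt.add {F G : ℝ → ℝ} {a b : ℝ} (hF : RepInt F a) (hG : RepInt G b) :
    RepInt (fun u => F u + G u) (a + b) :=
  ⟨hF.1.add hG.1, by rw [intervalIntegral.integral_add hF.1 hG.1, hF.2, hG.2]⟩

lemma RepInt.smul {F : ℝ → ℝ} {a : ℝ} (c : ℝ) (hF : RepInt F a) :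
    RepInt (fun u => c * F u) (c * a) :=
  ⟨hF.1.const_mul c, by rw [intervalIntegral.integral_const_mul, hF.2]⟩

lemma RepInt.sum {ι : Type*} (I : Finset ι) {F : ι → ℝ → ℝ} {a : ι → ℝ}
    (hF : ∀ i ∈ I, RepInt (F i) (a i)) :
    RepInt (fun u => ∑ i ∈ I, F i u) (∑ i ∈ I, a i) := by
  constructor
  · have := IntervalIntegrable.sum I (f := F) (fun i hi => (hF i hi).1)
    have e : (fun u => ∑ i ∈ I, F i u) = ∑ i ∈ I, F i := by funext u; simp
    rw [e]; exact this
  · rw [intervalIntegral.integral_finsetSum fun i hi => (hF i hi).1]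
    exact Finset.sum_congr rfl fun i hi => (hF i hi).2

lemma RepInt.nonneg {F : ℝ → ℝ} {a : ℝ} (hF : RepInt F a) (h : ∀ u, 0 ≤ F u) : 0 ≤ a := by
  rw [← hF.2]
  exact intervalIntegral.integral_nonneg_of_forall (by norm_num) h

open Classical in
lemma exists_sparse_set {X Ω : Type} [MetricSpace X] [Fintype X] [Fintype Ω]
    (f : X → Ω → ℝ) (hf0 : ∀ x ω, 0 ≤ f x ω) (hf1 : ∀ x, ∑ ω, f x ω = 1)
    (Δ ρ δ η : ℝ) (hδ : 0 < δ)
    (hclose : ∀ x y, dist x y ≤ Δ → 4 * δ ≤ ∑ ω, min (f x ω) (f y ω))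
    (hfar : ∀ x y, ρ < dist x y → ∑ ω, min (f x ω) (f y ω) ≤ η)
    (hη0 : 0 ≤ η) (hη : Fintype.card X * η < 2 * δ)
    (S : Finset (X × X)) (hS : S.Nonempty) (hSc : ∀ q ∈ S, dist q.1 q.2 ≤ Δ) :
    ∃ A : Finset X, (∀ x ∈ A, ∀ y ∈ A, dist x y ≤ 2 * ρ) ∧ (∃ q ∈ S, q.1 ∈ A ∨ q.2 ∈ A) ∧
      δ * (S.filter (fun q => q.1 ∈ A ∨ q.2 ∈ A)).card ≤ (S.filter (fun q => q.1 ∈ A ∧ q.2 ∈ A)).card := by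
  by_contra hcon
  push Not at hcon
  have hf1' : ∀ x ω, f x ω ≤ 1 := fun x ω => by
    rw [← hf1 x]; exact Finset.single_le_sum (fun ω _ => hf0 x ω) (Finset.mem_univ ω)
  have hrep : ∀ ω, RepInt (fun u => ∑ q ∈ S, ((δ * ((if u ≤ f q.1 ω then 1 else 0) + (if u ≤ f q.2 ω then 1 else 0))
      + (-1) * (if u ≤ min (f q.1 ω) (f q.2 ω) then 1 else 0))
      + ∑ z with ρ < dist q.1 z, (if u ≤ min (f q.1 ω) (f z ω) then 1 else 0)))
      (∑ q ∈ S, ((δ * (f q.1 ω + f q.2 ω) + (-1) * min (f q.1 ω) (f q.2 ω))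
        + ∑ z with ρ < dist q.1 z, min (f q.1 ω) (f z ω))) := by
    intro ω
    have hmin : ∀ x y, RepInt (fun u => if u ≤ min (f x ω) (f y ω) then (1:ℝ) else 0) (min (f x ω) (f y ω)) :=
      fun x y => RepInt.base _ (le_min (hf0 _ _) (hf0 _ _)) (min_le_of_left_le (hf1' _ _))
    apply RepInt.sum
    intro q _
    exact ((((RepInt.base _ (hf0 _ _) (hf1' _ _)).add (RepInt.base _ (hf0 _ _) (hf1' _ _))).smul δ).add
      ((hmin _ _).smul (-1))).add (RepInt.sum _ fun z _ => hmin _ _)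
  have hpt : ∀ ω, 0 ≤ ∑ q ∈ S, ((δ * (f q.1 ω + f q.2 ω) + (-1) * min (f q.1 ω) (f q.2 ω))
        + ∑ z with ρ < dist q.1 z, min (f q.1 ω) (f z ω)) := by
    intro ω
    apply (hrep ω).nonneg
    intro u
    by_cases hgood : ∀ x ∈ Finset.univ.filter (fun x => u ≤ f x ω), ∀ y ∈ Finset.univ.filter (fun x => u ≤ f x ω), dist x y ≤ 2 * ρ
    · have hb : ((S.filter (fun q => q.1 ∈ Finset.univ.filter (fun x => u ≤ f x ω) ∧ q.2 ∈ Finset.univ.filter (fun x => u ≤ f x ω))).card : ℝ)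
          ≤ δ * (S.filter (fun q => q.1 ∈ Finset.univ.filter (fun x => u ≤ f x ω) ∨ q.2 ∈ Finset.univ.filter (fun x => u ≤ f x ω))).card := by
        by_cases ht : ∃ q ∈ S, q.1 ∈ Finset.univ.filter (fun x => u ≤ f x ω) ∨ q.2 ∈ Finset.univ.filter (fun x => u ≤ f x ω)
        · obtain ⟨q, h1, h2⟩ := ht
          exact (hcon _ hgood ⟨q, h1, h2⟩).le
        · push Not at ht
          have : (S.filter (fun q => q.1 ∈ Finset.univ.filter (fun x => u ≤ f x ω) ∧ q.2 ∈ Finset.univ.filter (fun x => u ≤ f x ω))) = ∅ := by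
            apply Finset.filter_eq_empty_iff.mpr
            intro q hq h
            exact (ht q hq).1 h.1
          rw [this]; simp; positivity
      rw [Finset.card_filter, Finset.card_filter] at hb
      push_cast at hb
      have hmul : ∑ q ∈ S, (if q.1 ∈ Finset.univ.filter (fun x => u ≤ f x ω) ∧ q.2 ∈ Finset.univ.filter (fun x => u ≤ f x ω) then (1:ℝ) else 0)
        ≤ ∑ q ∈ S, δ * ((if u ≤ f q.1 ω then 1 else 0) + (if u ≤ f q.2 ω then 1 else 0)) := by
        refine hb.trans ?_
        rw [Finset.mul_sum]
        apply Finset.sum_le_sum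
        intro q _
        gcongr
        simp only [Finset.mem_filter, Finset.mem_univ, true_and]
        by_cases h1 : u ≤ f q.1 ω <;> by_cases h2 : u ≤ f q.2 ω <;> simp [h1, h2]
      rw [← sub_nonneg, ← Finset.sum_sub_distrib] at hmul
      refine hmul.trans (Finset.sum_le_sum fun q _ => ?_)
      have : (0:ℝ) ≤ ∑ z with ρ < dist q.1 z, (if u ≤ min (f q.1 ω) (f z ω) then 1 else 0) :=
        Finset.sum_nonneg fun z _ => by split_ifs <;> norm_num
      simp only [Finset.mem_filter, Finset.mem_univ, true_and, le_min_iff] at this ⊢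
      linarith
    · push Not at hgood
      obtain ⟨a, ha, b, hb, hab⟩ := hgood
      simp only [Finset.mem_filter, Finset.mem_univ, true_and] at ha hb
      apply Finset.sum_nonneg
      intro q _
      have h1 : (0:ℝ) ≤ δ * ((if u ≤ f q.1 ω then 1 else 0) + (if u ≤ f q.2 ω then 1 else 0)) := by
        apply mul_nonneg hδ.le
        split_ifs <;> norm_num
      have h2 : (if u ≤ min (f q.1 ω) (f q.2 ω) then (1:ℝ) else 0) ≤ ∑ z with ρ < dist q.1 z, (if u ≤ min (f q.1 ω) (f z ω) then 1 else 0) := by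
        have hnn : ∀ z ∈ Finset.univ.filter (fun z => ρ < dist q.1 z), (0:ℝ) ≤ (if u ≤ min (f q.1 ω) (f z ω) then 1 else 0) :=
          fun z _ => by split_ifs <;> norm_num
        split_ifs with hu
        · have hu1 := (le_min_iff.mp hu).1
          have : ∃ z, ρ < dist q.1 z ∧ u ≤ f z ω := by
            by_contra hno
            push Not at hno
            have e1 : dist q.1 a ≤ ρ := by
              by_contra h; exact absurd ha (not_le.mpr (hno a (not_le.mp h)))
            have e2 : dist q.1 b ≤ ρ := by
              by_contra h; exact absurd hb (not_le.mpr (hno b (not_le.mp h)))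
            have := dist_triangle_left a b q.1
            linarith
          obtain ⟨z, hz1, hz2⟩ := this
          refine le_trans ?_ (Finset.single_le_sum hnn (Finset.mem_filter.mpr ⟨Finset.mem_univ z, hz1⟩))
          rw [if_pos (le_min hu1 hz2)]
        · exact Finset.sum_nonneg hnn
      linarith
  have htot : 0 ≤ ∑ ω, ∑ q ∈ S, ((δ * (f q.1 ω + f q.2 ω) + (-1) * min (f q.1 ω) (f q.2 ω))
        + ∑ z with ρ < dist q.1 z, min (f q.1 ω) (f z ω)) := Finset.sum_nonneg fun ω _ => hpt ω
  rw [Finset.sum_comm] at htot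
  have hneg : ∑ q ∈ S, ∑ ω, ((δ * (f q.1 ω + f q.2 ω) + (-1) * min (f q.1 ω) (f q.2 ω))
        + ∑ z with ρ < dist q.1 z, min (f q.1 ω) (f z ω)) < 0 := by
    apply Finset.sum_neg _ hS
    intro q hq
    rw [Finset.sum_add_distrib, Finset.sum_add_distrib, ← Finset.mul_sum, ← Finset.mul_sum, Finset.sum_add_distrib, hf1, hf1,
      Finset.sum_comm]
    have h1 := hclose _ _ (hSc q hq)
    have h2 : ∑ z with ρ < dist q.1 z, ∑ ω, min (f q.1 ω) (f z ω) ≤ Fintype.card X * η := by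
      calc _ ≤ ∑ z with ρ < dist q.1 z, η := Finset.sum_le_sum fun z hz => hfar _ _ (Finset.mem_filter.mp hz).2
        _ = ((Finset.univ.filter (fun z => ρ < dist q.1 z)).card : ℝ) * η := by simp
        _ ≤ _ := by gcongr; exact Finset.card_le_univ _
    linarith
  linarith

open Classical in
/-- region growing -/
lemma exists_partition {X : Type} [MetricSpace X] [Fintype X] (close : X × X → Prop) (R δ : ℝ) (hR : 0 ≤ R)
    (hstep : ∀ S : Finset (X × X), S.Nonempty → (∀ q ∈ S, close q) →
      ∃ A : Finset X, (∀ x ∈ A, ∀ y ∈ A, dist x y ≤ R) ∧ (∃ q ∈ S, q.1 ∈ A ∨ q.2 ∈ A) ∧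
      δ * (S.filter (fun q => q.1 ∈ A ∨ q.2 ∈ A)).card ≤ (S.filter (fun q => q.1 ∈ A ∧ q.2 ∈ A)).card) :
    ∀ (k : ℕ) (S : Finset (X × X)), S.card = k → (∀ q ∈ S, close q) →
      ∃ h : X → ℕ, (∀ x y, h x = h y → dist x y ≤ R) ∧
        δ * S.card ≤ (S.filter (fun q => h q.1 = h q.2)).card := by
  intro k
  induction k using Nat.strong_induction_on with
  | _ k ih =>
  intro S hk hS
  rcases S.eq_empty_or_nonempty with rfl | hne
  · refine ⟨fun x => (Fintype.equivFin X x : ℕ), fun x y hxy => ?_, by simp⟩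
    have : x = y := (Fintype.equivFin X).injective (Fin.ext hxy)
    rw [this, dist_self]; exact hR
  obtain ⟨A, hA, ⟨q0, hq0, hq0A⟩, hcard⟩ := hstep S hne hS
  set S' := S.filter (fun q => ¬ (q.1 ∈ A ∨ q.2 ∈ A)) with hS'
  have hsplit : (S.filter (fun q => q.1 ∈ A ∨ q.2 ∈ A)).card + S'.card = S.card :=
    Finset.card_filter_add_card_filter_not _
  have hpos : 0 < (S.filter (fun q => q.1 ∈ A ∨ q.2 ∈ A)).card :=
    Finset.card_pos.mpr ⟨q0, Finset.mem_filter.mpr ⟨hq0, hq0A⟩⟩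
  obtain ⟨h', h1, h2⟩ := ih S'.card (by omega) S' rfl (fun q hq => hS q (Finset.mem_filter.mp hq).1)
  refine ⟨fun x => if x ∈ A then 0 else h' x + 1, ?_, ?_⟩
  · intro x y hxy
    by_cases hx : x ∈ A <;> by_cases hy : y ∈ A <;> simp [hx, hy] at hxy
    · exact hA x hx y hy
    · exact h1 x y hxy
  · have hdisj : Disjoint (S.filter (fun q => q.1 ∈ A ∧ q.2 ∈ A)) (S'.filter (fun q => h' q.1 = h' q.2)) := by
      rw [Finset.disjoint_left]
      intro q hq hq'
      simp only [hS', Finset.mem_filter] at hq hq'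
      exact hq'.1.2 (Or.inl hq.2.1)
    have hsub : (S.filter (fun q => q.1 ∈ A ∧ q.2 ∈ A)) ∪ (S'.filter (fun q => h' q.1 = h' q.2)) ⊆
        S.filter (fun q => (if q.1 ∈ A then 0 else h' q.1 + 1) = (if q.2 ∈ A then 0 else h' q.2 + 1)) := by
      intro q hq
      simp only [hS', Finset.mem_union, Finset.mem_filter, not_or] at hq ⊢
      rcases hq with ⟨a, b, c⟩ | ⟨⟨a, b, c⟩, d⟩
      · simp [a, b, c]
      · simp [a, b, c, d]
    have := Finset.card_le_card hsub
    rw [Finset.card_union_of_disjoint hdisj] at this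
    have this' : (((S.filter (fun q => q.1 ∈ A ∧ q.2 ∈ A)).card : ℝ) + (S'.filter (fun q => h' q.1 = h' q.2)).card) ≤
        (S.filter (fun q => (if q.1 ∈ A then 0 else h' q.1 + 1) = (if q.2 ∈ A then 0 else h' q.2 + 1))).card := by
      exact_mod_cast this
    refine le_trans ?_ this'
    have hs : (S.card : ℝ) = (S.filter (fun q => q.1 ∈ A ∨ q.2 ∈ A)).card + S'.card := by exact_mod_cast hsplit.symm
    rw [hs, mul_add]
    linarith

open Classical in
/-- greedy covering by partitions -/
lemma exists_cover {X : Type} [Fintype X] (good : (X → ℕ) → Prop) (close : X × X → Prop) (δ : ℝ)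
    (hδ1 : δ ≤ 1)
    (hstep : ∀ S : Finset (X × X), (∀ q ∈ S, close q) → ∃ h : X → ℕ, good h ∧
        δ * S.card ≤ (S.filter (fun q => h q.1 = h q.2)).card) (m : ℕ) :
    ∃ h : ℕ → X → ℕ, (∀ j, good (h j)) ∧
      (((Finset.univ : Finset (X × X)).filter (fun q => close q ∧ ∀ j < m, h j q.1 ≠ h j q.2)).card : ℝ)
        ≤ (1 - δ) ^ m * (Fintype.card X : ℝ) ^ 2 := by
  induction m with
  | zero =>
    obtain ⟨h, hh, _⟩ := hstep ∅ (by simp)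
    refine ⟨fun _ => h, fun _ => hh, ?_⟩
    have := Finset.card_le_univ ((Finset.univ : Finset (X × X)).filter (fun q => close q ∧ ∀ j < 0, h q.1 ≠ h q.2))
    rw [Fintype.card_prod] at this
    have h2 : (((Finset.univ : Finset (X × X)).filter (fun q => close q ∧ ∀ j < 0, h q.1 ≠ h q.2)).card : ℝ) ≤ (Fintype.card X : ℝ) * Fintype.card X := by
      exact_mod_cast this
    simp only [pow_zero, one_mul, sq]
    exact h2
  | succ m ih =>
    obtain ⟨h, hg, hc⟩ := ih
    set S := (Finset.univ : Finset (X × X)).filter (fun q => close q ∧ ∀ j < m, h j q.1 ≠ h j q.2) with hS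
    obtain ⟨h', hg', hc'⟩ := hstep S (fun q hq => (Finset.mem_filter.mp hq).2.1)
    refine ⟨fun j => if j = m then h' else h j, fun j => by
      dsimp only; split_ifs; exacts [hg', hg j], ?_⟩
    have hsub : ((Finset.univ : Finset (X × X)).filter (fun q => close q ∧ ∀ j < m + 1, (if j = m then h' else h j) q.1 ≠ (if j = m then h' else h j) q.2))
        ⊆ S.filter (fun q => ¬ h' q.1 = h' q.2) := by
      intro q hq
      simp only [hS, Finset.mem_filter, Finset.mem_univ, true_and] at hq ⊢
      refine ⟨⟨hq.1, fun j hj => ?_⟩, ?_⟩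
      · have := hq.2 j (by omega)
        rwa [if_neg (by omega)] at this
      · have := hq.2 m (by omega)
        rwa [if_pos rfl] at this
    have h1 := Finset.card_le_card hsub
    have h2 : (S.filter (fun q => h' q.1 = h' q.2)).card + (S.filter (fun q => ¬ h' q.1 = h' q.2)).card = S.card :=
      Finset.card_filter_add_card_filter_not _
    have h3 : ((S.filter (fun q => h' q.1 = h' q.2)).card : ℝ) + (S.filter (fun q => ¬ h' q.1 = h' q.2)).card = S.card := by
      exact_mod_cast h2
    refine le_trans (Nat.cast_le.mpr h1) ?_
    calc _ ≤ (1 - δ) * (S.card : ℝ) := by linarith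
      _ ≤ (1 - δ) * ((1 - δ) ^ m * (Fintype.card X : ℝ) ^ 2) := mul_le_mul_of_nonneg_left hc (by linarith)
      _ = _ := by ring

lemma lp_cover (p : ℝ) (hp1 : 1 < p) (hp2 : p < 2) [Fact (1 ≤ ENNReal.ofReal p)] :
    ∃ A : ℝ, 0 < A ∧ ∀ s : Finset (lp (fun _ : ℕ => ℝ) (ENNReal.ofReal p)), 2 ≤ s.card →
      ∀ τ : ℝ, 0 < τ → 4 * A ≤ τ ^ p → ∀ m : ℕ,
      2 * Real.log s.card * (8 * Real.exp (2 * A * (2 * Real.log s.card + 4) / τ ^ p)) < m →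
      ∀ Δ : ℝ, 0 < Δ → ∃ h : ℕ → ↥s → ℕ, (∀ j x y, h j x = h j y → dist x y ≤ 2 * (τ * Δ)) ∧
        ∀ x y, dist x y ≤ Δ → ∃ j < m, h j x = h j y := by
  obtain ⟨A, hA, haff⟩ := lp_affinity p hp1 hp2
  refine ⟨A, hA, fun s hs τ hτ hτA m hm Δ hΔ => ?_⟩
  set n : ℝ := (s.card : ℝ) with hn
  have hn2 : 2 ≤ n := by rw [hn]; exact_mod_cast hs
  have hlog : 0 ≤ Real.log n := Real.log_nonneg (by linarith)
  set L : ℝ := 2 * Real.log n + 4 with hL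
  have hL0 : 0 < L := by linarith
  have hτp : 0 < τ ^ p := Real.rpow_pos_of_pos hτ p
  have hτΔ : 0 < (τ * Δ) ^ p := Real.rpow_pos_of_pos (by positivity) p
  obtain ⟨Ω, _, g, hg0, hg1, hg⟩ := haff s (L / (τ * Δ) ^ p) (by positivity)
  set δ : ℝ := (1/8) * Real.exp (-(2 * A * L / τ ^ p)) with hδ
  have hδ0 : 0 < δ := by positivity
  have hδ1 : δ ≤ 1 := by
    have : Real.exp (-(2 * A * L / τ ^ p)) ≤ 1 := by
      rw [Real.exp_le_one_iff]
      have : 0 ≤ 2 * A * L / τ ^ p := by positivity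
      linarith
    linarith
  have hminsq : ∀ x y ω, min (g x ω ^ 2) (g y ω ^ 2) = (min (g x ω) (g y ω)) ^ 2 := by
    intro x y ω
    rcases le_total (g x ω) (g y ω) with h | h
    · rw [min_eq_left h, min_eq_left (pow_le_pow_left₀ (hg0 _ _) h 2)]
    · rw [min_eq_right h, min_eq_right (pow_le_pow_left₀ (hg0 _ _) h 2)]
  have hclose : ∀ x y : ↥s, dist x y ≤ Δ → 4 * δ ≤ ∑ ω, min (g x ω ^ 2) (g y ω ^ 2) := by
    intro x y hxy
    have h1 := (hg x y).1
    have h2 : Real.exp (-(A * L / τ ^ p)) ≤ ∑ ω, g x ω * g y ω := by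
      refine le_trans (Real.exp_le_exp.mpr ?_) h1
      have : dist x y ^ p ≤ Δ ^ p := Real.rpow_le_rpow dist_nonneg hxy (by linarith)
      have e : A * (L / (τ * Δ) ^ p) * Δ ^ p = A * L / τ ^ p := by
        rw [Real.mul_rpow hτ.le hΔ.le]
        have : Δ ^ p ≠ 0 := (Real.rpow_pos_of_pos hΔ p).ne'
        field_simp
      have : A * (L / (τ * Δ) ^ p) * dist x y ^ p ≤ A * L / τ ^ p := by
        rw [← e]; gcongr
      linarith
    have h3 : (∑ ω, g x ω * g y ω) ^ 2 ≤ (∑ ω, min (g x ω) (g y ω) ^ 2) * ∑ ω, max (g x ω) (g y ω) ^ 2 := by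
      have := Finset.sum_mul_sq_le_sq_mul_sq Finset.univ (fun ω => min (g x ω) (g y ω)) (fun ω => max (g x ω) (g y ω))
      simpa only [min_mul_max] using this
    have h4 : ∑ ω, max (g x ω) (g y ω) ^ 2 ≤ 2 := by
      calc _ ≤ ∑ ω, (g x ω ^ 2 + g y ω ^ 2) := by
            apply Finset.sum_le_sum; intro ω _
            rcases max_choice (g x ω) (g y ω) with h | h <;> rw [h] <;> nlinarith [sq_nonneg (g x ω), sq_nonneg (g y ω)]
        _ = 2 := by rw [Finset.sum_add_distrib, hg1, hg1]; norm_num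
    have h5 : 0 ≤ ∑ ω, min (g x ω) (g y ω) ^ 2 := Finset.sum_nonneg fun ω _ => sq_nonneg _
    have h6 : Real.exp (-(2 * A * L / τ ^ p)) ≤ (∑ ω, g x ω * g y ω) ^ 2 := by
      have : Real.exp (-(2 * A * L / τ ^ p)) = Real.exp (-(A * L / τ ^ p)) ^ 2 := by
        rw [← Real.exp_nat_mul]; congr 1; push_cast; ring
      rw [this]
      exact pow_le_pow_left₀ (Real.exp_pos _).le h2 2
    simp only [hminsq]
    rw [hδ]
    nlinarith
  have hfar : ∀ x y : ↥s, τ * Δ < dist x y → ∑ ω, min (g x ω ^ 2) (g y ω ^ 2) ≤ Real.exp (-L) := by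
    intro x y hxy
    calc _ ≤ ∑ ω, g x ω * g y ω := by
          apply Finset.sum_le_sum; intro ω _
          rw [hminsq, sq]
          exact mul_le_mul (min_le_left _ _) (min_le_right _ _) (le_min (hg0 _ _) (hg0 _ _)) (hg0 _ _)
      _ ≤ _ := (hg x y).2
      _ ≤ _ := by
        apply Real.exp_le_exp.mpr
        have : (τ * Δ) ^ p ≤ dist x y ^ p := Real.rpow_le_rpow (by positivity) hxy.le (by linarith)
        have : L / (τ * Δ) ^ p * (τ * Δ) ^ p ≤ L / (τ * Δ) ^ p * dist x y ^ p := by gcongr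
        rw [div_mul_cancel₀ _ hτΔ.ne'] at this
        linarith
  have hcardX : (Fintype.card ↥s : ℝ) = n := by rw [Fintype.card_coe]
  have hη : (Fintype.card ↥s : ℝ) * Real.exp (-L) < 2 * δ := by
    rw [hcardX]
    have e1 : n * Real.exp (-L) = Real.exp (-2) * Real.exp (-(L/2)) := by
      nth_rewrite 1 [← Real.exp_log (by linarith : 0 < n)]
      rw [← Real.exp_add, ← Real.exp_add]; congr 1; rw [hL]; ring
    have e2 : Real.exp (-(L/2)) ≤ Real.exp (-(2 * A * L / τ ^ p)) := by
      apply Real.exp_le_exp.mpr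
      have : 2 * A * L / τ ^ p ≤ L / 2 := by
        rw [div_le_div_iff₀ hτp (by norm_num)]; nlinarith
      linarith
    have e3 : Real.exp (-2) < 1/4 := by
      have h1 : Real.exp (-2) = Real.exp (-1) ^ 2 := by rw [← Real.exp_nat_mul]; norm_num
      have h2 := Real.exp_neg_one_lt_half
      rw [h1]; nlinarith [Real.exp_pos (-1)]
    rw [e1, hδ]
    nlinarith [Real.exp_pos (-(L/2))]
  have hpart := exists_partition (X := ↥s) (fun q => dist q.1 q.2 ≤ Δ) (2 * (τ * Δ)) δ (by positivity)
    (fun S hS hSc => exists_sparse_set (fun x ω => g x ω ^ 2) (fun _ _ => sq_nonneg _) hg1 Δ (τ * Δ) δ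
      (Real.exp (-L)) hδ0 hclose hfar (Real.exp_pos _).le hη S hS hSc)
  obtain ⟨h, hgood, hcov⟩ := exists_cover (X := ↥s) (fun h => ∀ x y, h x = h y → dist x y ≤ 2 * (τ * Δ))
    (fun q => dist q.1 q.2 ≤ Δ) δ hδ1 (fun S hS => hpart S.card S rfl hS) m
  refine ⟨h, hgood, fun x y hxy => ?_⟩
  by_contra hno
  push Not at hno
  have hlt : (1 - δ) ^ m * (Fintype.card ↥s : ℝ) ^ 2 < 1 := by
    rw [hcardX]
    have hb : (1 - δ) ^ m ≤ Real.exp (-(δ * m)) := by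
      have : 1 - δ ≤ Real.exp (-δ) := by linarith [Real.add_one_le_exp (-δ)]
      calc _ ≤ Real.exp (-δ) ^ m := pow_le_pow_left₀ (by linarith) this m
        _ = _ := by rw [← Real.exp_nat_mul]; congr 1; ring
    have hn' : n ^ 2 = Real.exp (2 * Real.log n) := by
      have := Real.exp_nat_mul (Real.log n) 2
      rw [Real.exp_log (by linarith : 0 < n)] at this
      rw [← this]; norm_num
    have hdm : 2 * Real.log n < δ * m := by
      have hδi : δ * (8 * Real.exp (2 * A * L / τ ^ p)) = 1 := by
        have : Real.exp (-(2 * A * L / τ ^ p)) * Real.exp (2 * A * L / τ ^ p) = 1 := by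
          rw [← Real.exp_add]; simp
        rw [hδ]; linarith
      have := mul_lt_mul_of_pos_left hm hδ0
      calc 2 * Real.log n = δ * (2 * Real.log n * (8 * Real.exp (2 * A * L / τ ^ p))) := by
            linear_combination (-2 * Real.log n) * hδi
        _ < _ := this
    calc _ ≤ Real.exp (-(δ * m)) * n ^ 2 := by gcongr
      _ = Real.exp (-(δ * m) + 2 * Real.log n) := by rw [hn', Real.exp_add]
      _ < 1 := by rw [Real.exp_lt_one_iff]; linarith
  have hone : (1:ℝ) ≤ (1 - δ) ^ m * (Fintype.card ↥s : ℝ) ^ 2 := by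
    refine le_trans ?_ hcov
    rw [Nat.one_le_cast]
    apply Finset.card_pos.mpr
    exact ⟨(x, y), by simp only [Finset.mem_filter, Finset.mem_univ, true_and]; exact ⟨hxy, hno⟩⟩
  linarith

section GraphPart

variable {X : Type} [MetricSpace X]

lemma symDist_mk (a b : X) : symDist s(a, b) = dist a b := rfl

lemma symDist_nonneg (e : Sym2 X) : 0 ≤ symDist e := by
  induction e with | _ a b => exact dist_nonneg

lemma walkWeight_nil {G : SimpleGraph X} (u : X) : walkWeight (SimpleGraph.Walk.nil : G.Walk u u) = 0 := by
  simp [walkWeight]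

lemma walkWeight_cons {G : SimpleGraph X} {u v w : X} (h : G.Adj u v) (p : G.Walk v w) :
    walkWeight (SimpleGraph.Walk.cons h p) = dist u v + walkWeight p := by
  simp [walkWeight, symDist_mk]

lemma walkWeight_append {G : SimpleGraph X} {u v w : X} (p : G.Walk u v) (q : G.Walk v w) :
    walkWeight (p.append q) = walkWeight p + walkWeight q := by
  simp [walkWeight]

lemma walkWeight_reverse {G : SimpleGraph X} {u v : X} (p : G.Walk u v) :
    walkWeight p.reverse = walkWeight p := by
  simp [walkWeight, List.sum_reverse]

lemma dist_le_walkWeight {G : SimpleGraph X} {u v : X} (p : G.Walk u v) : dist u v ≤ walkWeight p := by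
  induction p with
  | nil => simp [walkWeight_nil]
  | cons h p ih =>
    rw [walkWeight_cons]
    exact (dist_triangle _ _ _).trans (by linarith)

/-- variation of a function on unordered pairs -/
def symVar (φ : X → ℝ) : Sym2 X → ℝ :=
  Sym2.lift ⟨fun a b => |φ a - φ b|, fun a b => abs_sub_comm _ _⟩

lemma symVar_nonneg (φ : X → ℝ) (e : Sym2 X) : 0 ≤ symVar φ e := by
  induction e with | _ a b => exact abs_nonneg _

lemma var_le_walk (φ : X → ℝ) {G : SimpleGraph X} {u v : X} (p : G.Walk u v) :
    |φ u - φ v| ≤ (p.edges.map (symVar φ)).sum := by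
  induction p with
  | nil => simp
  | @cons a b c h p ih =>
    simp only [SimpleGraph.Walk.edges_cons, List.map_cons, List.sum_cons]
    have : symVar φ s(a, b) = |φ a - φ b| := rfl
    rw [this]
    exact (abs_sub_le _ (φ b) _).trans (by linarith)

lemma var_le_graph [Fintype X] (φ : X → ℝ) {G : SimpleGraph X} (hG : G.Connected) (u v : X) :
    |φ u - φ v| ≤ ∑ e ∈ G.edgeSet.toFinite.toFinset, symVar φ e := by
  classical
  obtain ⟨p, hp⟩ := hG.exists_isPath u v
  refine (var_le_walk φ p).trans ?_
  rw [← List.sum_toFinset _ hp.isTrail.edges_nodup]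
  apply Finset.sum_le_sum_of_subset_of_nonneg
  · intro e he
    rw [List.mem_toFinset] at he
    simpa using p.edges_subset_edgeSet he
  · intro e _ _; exact symVar_nonneg φ e

lemma bump_lip (r : ℝ) (v a b : X) :
    |max 0 (r/2 - dist v a) - max 0 (r/2 - dist v b)| ≤ dist a b := by
  have h1 := dist_triangle v a b
  have h2 := dist_triangle_right v a b
  rw [abs_le]
  rcases max_cases 0 (r/2 - dist v a) with h | h <;> rcases max_cases 0 (r/2 - dist v b) with h' | h' <;>
    rw [h.1, h'.1] <;> constructor <;> linarith [dist_nonneg (x := a) (y := b)]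

lemma bump_sum (N : Finset X) (r : ℝ) (hsep : ∀ x ∈ N, ∀ y ∈ N, x ≠ y → r ≤ dist x y) (a b : X) :
    ∑ v ∈ N, |max 0 (r/2 - dist v a) - max 0 (r/2 - dist v b)| ≤ dist a b := by
  have huniq : ∀ c : X, ∀ v ∈ N, ∀ w ∈ N, 0 < r/2 - dist v c → w ≠ v → max 0 (r/2 - dist w c) = 0 := by
    intro c v hv w hw h1 h2
    apply max_eq_left
    have := hsep w hw v hv h2
    have := dist_triangle_right w v c
    linarith
  have hzero : ∀ c : X, (¬ ∃ v ∈ N, 0 < r/2 - dist v c) → ∀ w ∈ N, max 0 (r/2 - dist w c) = 0 := by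
    intro c h w hw
    push Not at h
    exact max_eq_left (h w hw)
  by_cases hA : ∃ v ∈ N, 0 < r/2 - dist v a <;> by_cases hB : ∃ v ∈ N, 0 < r/2 - dist v b
  · obtain ⟨v, hv, h1⟩ := hA
    obtain ⟨w, hw, h2⟩ := hB
    by_cases hvw : v = w
    · subst hvw
      rw [Finset.sum_eq_single_of_mem v hv]
      · exact bump_lip r v a b
      · intro z hz hzv
        rw [huniq a v hv z hz h1 hzv, huniq b v hv z hz h2 hzv]; simp
    · rw [Finset.sum_eq_add_of_mem v w hv hw hvw]
      · rw [huniq a v hv w hw h1 (Ne.symm hvw), huniq b w hw v hv h2 hvw, max_eq_right h1.le, max_eq_right h2.le,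
          sub_zero, zero_sub, abs_neg, abs_of_pos h1, abs_of_pos h2]
        have := hsep v hv w hw hvw
        have h3 := dist_triangle4 v a b w
        rw [dist_comm b w] at h3
        linarith
      · intro z hz hzv
        rw [huniq a v hv z hz h1 hzv.1, huniq b w hw z hz h2 hzv.2]; simp
  · obtain ⟨v, hv, h1⟩ := hA
    rw [Finset.sum_eq_single_of_mem v hv]
    · exact bump_lip r v a b
    · intro z hz hzv
      rw [huniq a v hv z hz h1 hzv, hzero b hB z hz]; simp
  · obtain ⟨v, hv, h1⟩ := hB
    rw [Finset.sum_eq_single_of_mem v hv]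
    · exact bump_lip r v a b
    · intro z hz hzv
      rw [huniq b v hv z hz h1 hzv, hzero a hA z hz]; simp
  · rw [Finset.sum_eq_zero]
    · exact dist_nonneg
    · intro z hz
      rw [hzero a hA z hz, hzero b hB z hz]; simp

lemma sep_le_mst [Fintype X] (N : Finset X) (r : ℝ) (hr : 0 ≤ r) (hN : 2 ≤ N.card)
    (hsep : ∀ x ∈ N, ∀ y ∈ N, x ≠ y → r ≤ dist x y) : N.card * (r / 2) ≤ mstWeight X := by
  obtain ⟨x0, hx0⟩ : N.Nonempty := Finset.card_pos.mp (by omega)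
  haveI : Nonempty X := ⟨x0⟩
  apply le_csInf
  · exact ⟨_, ⊤, SimpleGraph.connected_top, rfl⟩
  rintro _ ⟨G, hG, rfl⟩
  calc (N.card : ℝ) * (r/2) = ∑ v ∈ N, r / 2 := by simp
    _ ≤ ∑ v ∈ N, ∑ e ∈ G.edgeSet.toFinite.toFinset, symVar (fun z => max 0 (r/2 - dist v z)) e := by
      apply Finset.sum_le_sum
      intro v hv
      obtain ⟨w, hw, hwv⟩ := Finset.exists_mem_ne (by omega : 1 < N.card) v
      refine le_trans ?_ (var_le_graph _ hG v w)
      have := hsep v hv w hw hwv.symm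
      simp only [dist_self, sub_zero]
      rw [max_eq_right (by linarith), max_eq_left (by linarith), sub_zero]
      exact le_abs_self _
    _ = ∑ e ∈ G.edgeSet.toFinite.toFinset, ∑ v ∈ N, symVar (fun z => max 0 (r/2 - dist v z)) e := Finset.sum_comm
    _ ≤ graphWeight G := by
      apply Finset.sum_le_sum
      intro e _
      induction e with
      | _ a b => exact bump_sum N r hsep a b

lemma dist_le_mst [Fintype X] (x y : X) (hxy : x ≠ y) : dist x y ≤ mstWeight X := by
  classical
  have := sep_le_mst ({x, y} : Finset X) (dist x y) dist_nonneg (by rw [Finset.card_pair hxy]) (by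
    intro a ha b hb hab
    simp only [Finset.mem_insert, Finset.mem_singleton] at ha hb
    rcases ha with rfl | rfl <;> rcases hb with rfl | rfl
    · exact absurd rfl hab
    · exact le_rfl
    · rw [dist_comm]
    · exact absurd rfl hab)
  rw [Finset.card_pair hxy] at this
  push_cast at this
  linarith

/-- separated set -/
def SepSet (r : ℝ) (N : Finset X) : Prop := ∀ x ∈ N, ∀ y ∈ N, x ≠ y → r ≤ dist x y

open Classical in
lemma exists_net [Fintype X] (r : ℝ) (hr : 0 < r) (A : Finset X) (hA : SepSet r A) :
    ∃ B, A ⊆ B ∧ SepSet r B ∧ ∀ x, ∃ z ∈ B, dist x z < r := by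
  obtain ⟨B, hB, hmax⟩ := Finset.exists_max_image
    ((Finset.univ : Finset (Finset X)).filter (fun B => A ⊆ B ∧ SepSet r B)) Finset.card
    ⟨A, by simp [hA]⟩
  simp only [Finset.mem_filter, Finset.mem_univ, true_and] at hB hmax
  refine ⟨B, hB.1, hB.2, fun x => ?_⟩
  by_contra hno
  push Not at hno
  have hx : x ∉ B := fun hx => by
    have := hno x hx
    rw [dist_self] at this; linarith
  have := hmax (insert x B) ⟨hB.1.trans (Finset.subset_insert _ _), ?_⟩
  · rw [Finset.card_insert_of_notMem hx] at this; omega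
  · intro a ha b hb hab
    rw [Finset.mem_insert] at ha hb
    rcases ha with rfl | ha <;> rcases hb with rfl | hb
    · exact absurd rfl hab
    · exact hno b hb
    · rw [dist_comm]; exact hno a ha
    · exact hB.2 a ha b hb hab

lemma exists_nets [Fintype X] (r : ℕ → ℝ) (hr : ∀ i, 0 < r i) (hanti : Antitone r) :
    ∃ N : ℕ → Finset X, Monotone N ∧ (∀ i, SepSet (r i) (N i)) ∧ ∀ i x, ∃ z ∈ N i, dist x z < r i := by
  have : ∀ (A : Finset X) (i : ℕ), ∃ B, SepSet (r i) A → (A ⊆ B ∧ SepSet (r i) B ∧ ∀ x, ∃ z ∈ B, dist x z < r i) := by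
    intro A i
    by_cases h : SepSet (r i) A
    · obtain ⟨B, hB⟩ := exists_net (r i) (hr i) A h
      exact ⟨B, fun _ => hB⟩
    · exact ⟨A, fun h' => absurd h' h⟩
  choose E hE using this
  let N : ℕ → Finset X := fun i => Nat.rec (E ∅ 0) (fun i A => E A (i + 1)) i
  have hN : ∀ i, SepSet (r i) (N i) ∧ ∀ x, ∃ z ∈ N i, dist x z < r i := by
    intro i
    induction i with
    | zero => exact (hE ∅ 0 (fun x hx => absurd hx (by simp))).2
    | succ i ih =>
      exact (hE (N i) (i+1) (fun x hx y hy hxy => (hanti (Nat.le_succ i)).trans (ih.1 x hx y hy hxy))).2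
  refine ⟨N, monotone_nat_of_le_succ fun i => ?_, fun i => (hN i).1, fun i => (hN i).2⟩
  exact (hE (N i) (i+1) (fun x hx y hy hxy => (hanti (Nat.le_succ i)).trans ((hN i).1 x hx y hy hxy))).1

end GraphPart

section GraphPart2

variable {X : Type} [MetricSpace X]

lemma level_sum (B : ℕ → ℝ) (W n : ℝ) (i1 J : ℕ) (hW : 0 ≤ W) (hn0 : 0 ≤ n) (hn : n ≤ 2 ^ i1)
    (h1 : ∀ i, B i ≤ 16 * W) (h2 : ∀ i, B i ≤ n * (W / 2 ^ i)) :
    ∑ i ∈ Finset.range (i1 + J), B i ≤ 16 * W * (i1 + 2) := by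
  rw [Finset.sum_range_add]
  have a1 : ∑ i ∈ Finset.range i1, B i ≤ i1 * (16 * W) := by
    refine (Finset.sum_le_sum fun i _ => h1 i).trans ?_
    simp
  have a2 : ∑ k ∈ Finset.range J, B (i1 + k) ≤ 2 * W := by
    have : ∀ k ∈ Finset.range J, B (i1 + k) ≤ W * (1 / 2 : ℝ) ^ k := by
      intro k _
      refine (h2 _).trans ?_
      have e : n * (W / 2 ^ (i1 + k)) = (n / 2 ^ i1) * (W * (1 / 2 : ℝ) ^ k) := by
        rw [pow_add, one_div, inv_pow]; field_simp
      rw [e]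
      have : n / 2 ^ i1 ≤ 1 := by rw [div_le_one (by positivity)]; exact hn
      exact mul_le_of_le_one_left (by positivity) this
    refine (Finset.sum_le_sum this).trans ?_
    rw [← Finset.mul_sum]
    have := sum_geometric_two_le J
    nlinarith
  nlinarith

lemma isSpanner_of_walks {H : SimpleGraph X} {c : ℝ}
    (h : ∀ x y : X, ∃ w : H.Walk x y, walkWeight w ≤ c * dist x y) : IsSpanner H c := by
  intro u v
  obtain ⟨w, hw⟩ := h u v
  constructor
  · refine le_csInf ⟨walkWeight w, w, rfl⟩ ?_
    rintro _ ⟨q, rfl⟩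
    exact dist_le_walkWeight q
  · have hb : BddBelow {c | ∃ p : H.Walk u v, walkWeight p = c} := by
      refine ⟨dist u v, ?_⟩
      rintro _ ⟨q, rfl⟩
      exact dist_le_walkWeight q
    exact (csInf_le hb ⟨w, rfl⟩).trans hw

lemma mst_pos [Fintype X] (hn : 2 ≤ Fintype.card X) : 0 < mstWeight X := by
  obtain ⟨x, y, hxy⟩ := Fintype.one_lt_card_iff.mp (by omega : 1 < Fintype.card X)
  exact (dist_pos.mpr hxy).trans_le (dist_le_mst x y hxy)

/-- stretch analysis -/
lemma stretch_walks [Fintype X] (D T : ℝ) (hD : 0 < D) (hT : 1 ≤ T)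
    (hdD : ∀ x y : X, dist x y ≤ D) (I : ℕ)
    (hI : ∀ x y : X, x ≠ y → D / 2 ^ I < dist x y) (H : SimpleGraph X) (N : ℕ → Finset X)
    (hnet : ∀ i x, ∃ z ∈ N i, dist x z < D / 2 ^ i / 8)
    (hstep : ∀ i < I, ∀ x ∈ N i, ∀ y ∈ N i, dist x y ≤ 2 * (D / 2 ^ i) →
      ∃ w : H.Walk x y, walkWeight w ≤ 4 * T * (D / 2 ^ i)) (x y : X) :
    ∃ w : H.Walk x y, walkWeight w ≤ 16 * T * dist x y := by
  have key : ∀ k : ℕ, ∀ x y : X, dist x y ≤ D / 2 ^ I * 2 ^ k →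
      ∃ w : H.Walk x y, walkWeight w ≤ 16 * T * dist x y := by
    intro k
    induction k with
    | zero =>
      intro x y h
      by_cases hxy : x = y
      · subst hxy
        exact ⟨SimpleGraph.Walk.nil, by rw [walkWeight_nil, dist_self]; simp⟩
      · have := hI x y hxy
        simp at h; linarith
    | succ k ih =>
      intro x y h
      by_cases hxy : x = y
      · subst hxy
        exact ⟨SimpleGraph.Walk.nil, by rw [walkWeight_nil, dist_self]; simp⟩
      have hd : 0 < dist x y := dist_pos.mpr hxy
      obtain ⟨i, hi1, hi2⟩ := exists_nat_pow_near (x := D / dist x y) (y := (2:ℝ))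
        ((one_le_div hd).mpr (hdD x y)) one_lt_two
      have hle : dist x y ≤ D / 2 ^ i := by
        rw [le_div_iff₀ hd] at hi1
        rw [le_div_iff₀ (by positivity)]; linarith
      have hlt : D / 2 ^ i < 2 * dist x y := by
        rw [div_lt_iff₀ hd, pow_succ] at hi2
        rw [div_lt_iff₀ (by positivity)]; linarith
      have hiI : i < I := by
        by_contra hcon
        push Not at hcon
        have h1 := hI x y hxy
        have h2 : D / 2 ^ i ≤ D / 2 ^ I := by
          apply div_le_div_of_nonneg_left hD.le (by positivity)
          exact pow_le_pow_right₀ one_le_two hcon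
        linarith
      obtain ⟨x', hx', hxx⟩ := hnet i x
      obtain ⟨y', hy', hyy⟩ := hnet i y
      have hx'y' : dist x' y' ≤ 2 * (D / 2 ^ i) := by
        have := dist_triangle4 x' x y y'
        rw [dist_comm x' x] at this
        linarith
      obtain ⟨w, hw⟩ := hstep i hiI x' hx' y' hy' hx'y'
      rw [pow_succ] at h
      obtain ⟨w1, hw1⟩ := ih x x' (by linarith)
      obtain ⟨w2, hw2⟩ := ih y' y (by rw [dist_comm]; linarith)
      refine ⟨w1.append (w.append w2), ?_⟩
      rw [walkWeight_append, walkWeight_append]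
      rw [dist_comm] at hw2
      have e1 : 16 * T * dist x x' ≤ 16 * T * (D / 2 ^ i / 8) := by gcongr
      have e2 : 16 * T * dist y y' ≤ 16 * T * (D / 2 ^ i / 8) := by gcongr
      have e3 : T * (D / 2 ^ i) ≤ T * (2 * dist x y) := by gcongr
      linarith
  refine key I x y ?_
  rw [div_mul_cancel₀ _ (by positivity)]
  exact hdD x y

lemma edge_sum_le [Fintype X] [DecidableEq X] {ι : Type} (S : Finset ι) (f : ι → Sym2 X) :
    graphWeight (SimpleGraph.fromEdgeSet (↑(S.image f) : Set (Sym2 X))) ≤ ∑ q ∈ S, symDist (f q) := by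
  unfold graphWeight
  refine (Finset.sum_le_sum_of_subset_of_nonneg (t := S.image f) ?_ fun e _ _ => symDist_nonneg e).trans ?_
  · intro e he
    rw [Set.Finite.mem_toFinset, SimpleGraph.edgeSet_fromEdgeSet] at he
    exact he.1
  · exact Finset.sum_image_le_of_nonneg fun e _ => symDist_nonneg e

lemma edge_card_le [Fintype X] [DecidableEq X] {ι : Type} (S : Finset ι) (f : ι → Sym2 X) :
    edgeCount (SimpleGraph.fromEdgeSet (↑(S.image f) : Set (Sym2 X))) ≤ S.card := by
  unfold edgeCount
  rw [Nat.card_coe_set_eq, SimpleGraph.edgeSet_fromEdgeSet]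
  refine (Set.ncard_le_ncard Set.sdiff_subset (Finset.finite_toSet _)).trans ?_
  rw [Set.ncard_coe_finset]
  exact Finset.card_image_le

open Classical in
lemma graph_part [Fintype X] (hn : 2 ≤ Fintype.card X) (T : ℝ) (hT : 1 ≤ T) (m l : ℕ)
    (hl : 16 * T < 2 ^ l)
    (hcov : ∀ Δ : ℝ, 0 < Δ → ∃ h : ℕ → X → ℕ, (∀ j x y, h j x = h j y → dist x y ≤ T * Δ) ∧
        ∀ x y, dist x y ≤ Δ → ∃ j < m, h j x = h j y) :
    ∃ H : SimpleGraph X, IsSpanner H (16 * T) ∧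
      graphWeight H ≤ m * (32 * T * mstWeight X * (Nat.clog 2 (Fintype.card X) + 2)) ∧
      edgeCount H ≤ m * (l * Fintype.card X) := by
  set D := mstWeight X with hDdef
  have hD : 0 < D := mst_pos hn
  have hdD : ∀ x y : X, dist x y ≤ D := by
    intro x y
    by_cases hxy : x = y
    · subst hxy; rw [dist_self]; exact hD.le
    · exact dist_le_mst x y hxy
  have hpos : ∀ i : ℕ, 0 < D / 2 ^ i := fun i => by positivity
  obtain ⟨N, hmono, hsep, hnet⟩ := exists_nets (X := X) (fun i => D / 2 ^ i / 8)
    (fun i => by have := hpos i; positivity) (by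
      intro i j hij
      show D / 2 ^ j / 8 ≤ D / 2 ^ i / 8
      have := pow_le_pow_right₀ (one_le_two (α := ℝ)) hij
      gcongr)
  have hcov' := fun i : ℕ => hcov (2 * (D / 2 ^ i)) (by have := hpos i; positivity)
  choose h hdiam hpair using hcov'
  let Base : ℕ → Finset X := fun i => if l ≤ i then N (i - l) else ∅
  have hBase : ∀ i, ∀ x ∈ Base i, l ≤ i ∧ x ∈ N (i - l) := by
    intro i x hx
    by_cases hli : l ≤ i
    · simp only [Base, if_pos hli] at hx; exact ⟨hli, hx⟩
    · simp [Base, if_neg hli] at hx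
  have hBN : ∀ i, ∀ x ∈ Base i, x ∈ N i := fun i x hx =>
    hmono (Nat.sub_le i l) (hBase i x hx).2
  have huniq : ∀ i j x y, x ∈ Base i → y ∈ Base i → h i j x = h i j y → x = y := by
    intro i j x y hx hy hxy
    by_contra hne
    obtain ⟨hli, hx'⟩ := hBase i x hx
    have h1 := hsep (i - l) x hx' y (hBase i y hy).2 hne
    have h2 := hdiam i j x y hxy
    have e : D / 2 ^ (i - l) = D / 2 ^ i * 2 ^ l := by
      rw [← Nat.sub_add_cancel hli, pow_add, Nat.add_sub_cancel]; field_simp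
    simp only [e] at h1
    have := hpos i
    nlinarith
  have hctr : ∀ i j b, ∃ z : X, (∃ x ∈ N i, h i j x = b) →
      (z ∈ N i ∧ h i j z = b ∧ ∀ w ∈ Base i, h i j w = b → z = w) := by
    intro i j b
    by_cases hb : ∃ w ∈ Base i, h i j w = b
    · obtain ⟨w, hw, hwb⟩ := hb
      exact ⟨w, fun _ => ⟨hBN i w hw, hwb, fun w' hw' hw'b => huniq i j w w' hw hw' (hwb.trans hw'b.symm)⟩⟩
    · by_cases hx : ∃ x ∈ N i, h i j x = b
      · obtain ⟨x, hx, hxb⟩ := hx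
        exact ⟨x, fun _ => ⟨hx, hxb, fun w hw hwb => absurd ⟨w, hw, hwb⟩ hb⟩⟩
      · obtain ⟨x, -⟩ := Fintype.one_lt_card_iff.mp (by omega : 1 < Fintype.card X)
        exact ⟨x, fun h' => absurd h' hx⟩
  choose ctr hctr using hctr
  obtain ⟨J, hJ⟩ : ∃ J : ℕ, ∀ x y : X, x ≠ y → D / 2 ^ J < dist x y := by
    have : ∀ q : X × X, ∃ J : ℕ, q.1 ≠ q.2 → D / 2 ^ J < dist q.1 q.2 := by
      intro q
      by_cases hq : q.1 = q.2
      · exact ⟨0, fun h => absurd hq h⟩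
      · have hd := dist_pos.mpr hq
        obtain ⟨J, hJ⟩ := pow_unbounded_of_one_lt (D / dist q.1 q.2) (one_lt_two (α := ℝ))
        refine ⟨J, fun _ => ?_⟩
        rw [div_lt_iff₀ hd] at hJ
        rw [div_lt_iff₀ (by positivity)]; linarith
    choose Jf hJf using this
    refine ⟨∑ q, Jf q, fun x y hxy => lt_of_le_of_lt ?_ (hJf (x, y) hxy)⟩
    apply div_le_div_of_nonneg_left hD.le (by positivity)
    exact pow_le_pow_right₀ one_le_two (Finset.single_le_sum (f := Jf) (fun _ _ => Nat.zero_le _) (Finset.mem_univ (x, y)))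
  set i1 := Nat.clog 2 (Fintype.card X) with hi1
  let I := i1 + J
  let S : Finset (ℕ × ℕ × X) := (Finset.range I ×ˢ (Finset.range m ×ˢ Finset.univ)).filter
    (fun q => q.2.2 ∈ N q.1 \ Base q.1)
  let f : ℕ × ℕ × X → Sym2 X := fun q => s(q.2.2, ctr q.1 q.2.1 (h q.1 q.2.1 q.2.2))
  refine ⟨SimpleGraph.fromEdgeSet (↑(S.image f) : Set (Sym2 X)), ?_, ?_, ?_⟩
  · apply isSpanner_of_walks
    refine stretch_walks D T hD hT hdD I (fun x y hxy => lt_of_le_of_lt ?_ (hJ x y hxy)) _ N hnet ?_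
    · apply div_le_div_of_nonneg_left hD.le (by positivity)
      exact pow_le_pow_right₀ one_le_two (Nat.le_add_left _ _)
    · intro i hi x hx y hy hxy
      obtain ⟨j, hj, hjxy⟩ := hpair i x y hxy
      have walk : ∀ u ∈ N i, ∃ w : (SimpleGraph.fromEdgeSet (↑(S.image f) : Set (Sym2 X))).Walk u (ctr i j (h i j u)),
          walkWeight w ≤ 2 * T * (D / 2 ^ i) := by
        intro u hu
        have hc := hctr i j (h i j u) ⟨u, hu, rfl⟩
        by_cases huc : u = ctr i j (h i j u)
        · rw [← huc]
          exact ⟨SimpleGraph.Walk.nil, by rw [walkWeight_nil]; have := hpos i; positivity⟩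
        · have hub : u ∉ Base i := fun hub => huc (hc.2.2 u hub rfl).symm
          have hadj : (SimpleGraph.fromEdgeSet (↑(S.image f) : Set (Sym2 X))).Adj u (ctr i j (h i j u)) := by
            rw [SimpleGraph.fromEdgeSet_adj]
            refine ⟨?_, huc⟩
            rw [Finset.mem_coe, Finset.mem_image]
            refine ⟨(i, j, u), ?_, rfl⟩
            simp [S, hi, hj, hu, hub]
          refine ⟨SimpleGraph.Walk.cons hadj SimpleGraph.Walk.nil, ?_⟩
          rw [walkWeight_cons, walkWeight_nil]
          have := hdiam i j u _ hc.2.1.symm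
          linarith
      obtain ⟨w1, hw1⟩ := walk x hx
      have hy2 := walk y hy
      rw [← hjxy] at hy2
      obtain ⟨w2, hw2⟩ := hy2
      refine ⟨w1.append w2.reverse, ?_⟩
      rw [walkWeight_append, walkWeight_reverse]
      linarith
  · refine (edge_sum_le S f).trans ?_
    let g : ℕ → ℕ → ℝ := fun i j => ∑ x ∈ N i, dist x (ctr i j (h i j x))
    have hterm : ∀ i j, ∀ x ∈ N i, dist x (ctr i j (h i j x)) ≤ 2 * T * D / 2 ^ i := by
      intro i j x hx
      have := hdiam i j x _ (hctr i j (h i j x) ⟨x, hx, rfl⟩).2.1.symm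
      refine this.trans (le_of_eq ?_)
      ring
    have hg0 : ∀ i j, g i j ≤ (N i).card * (2 * T * D / 2 ^ i) := by
      intro i j
      refine (Finset.sum_le_sum (hterm i j)).trans ?_
      simp
    have hg2 : ∀ i j, g i j ≤ (Fintype.card X : ℝ) * ((2 * T * D) / 2 ^ i) := by
      intro i j
      refine (hg0 i j).trans ?_
      have : ((N i).card : ℝ) ≤ Fintype.card X := by exact_mod_cast Finset.card_le_univ _
      gcongr
    have hg1 : ∀ i j, g i j ≤ 16 * (2 * T * D) := by
      intro i j
      by_cases hc : 2 ≤ (N i).card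
      · have h1 := sep_le_mst (N i) (D / 2 ^ i / 8) (by have := hpos i; positivity) hc (hsep i)
        rw [← hDdef] at h1
        refine (hg0 i j).trans ?_
        have e : ((N i).card : ℝ) * (2 * T * D / 2 ^ i) = 32 * T * ((N i).card * (D / 2 ^ i / 8 / 2)) := by ring
        rw [e]
        have : 32 * T * ((N i).card * (D / 2 ^ i / 8 / 2)) ≤ 32 * T * D := by gcongr
        linarith
      · have : g i j = 0 := by
          apply Finset.sum_eq_zero
          intro x hx
          have := (hctr i j (h i j x) ⟨x, hx, rfl⟩).1
          rw [dist_eq_zero]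
          exact Finset.card_le_one.mp (by omega) x hx _ this
        rw [this]; positivity
    have hS : ∑ q ∈ S, symDist (f q) ≤ ∑ i ∈ Finset.range I, ∑ j ∈ Finset.range m, g i j := by
      rw [Finset.sum_filter, Finset.sum_product]
      refine Finset.sum_le_sum fun i _ => ?_
      rw [Finset.sum_product]
      refine Finset.sum_le_sum fun j _ => ?_
      rw [← Finset.sum_filter]
      refine Finset.sum_le_sum_of_subset_of_nonneg ?_ fun _ _ _ => dist_nonneg
      intro x hx
      simp only [Finset.mem_filter, Finset.mem_sdiff] at hx
      exact hx.2.1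
    refine hS.trans ?_
    rw [Finset.sum_comm]
    have hcl : (Fintype.card X : ℝ) ≤ 2 ^ i1 := by
      exact_mod_cast Nat.le_pow_clog (by norm_num) _
    have := fun j => level_sum (fun i => g i j) (2 * T * D) (Fintype.card X) i1 J (by positivity)
      (by positivity) hcl (fun i => hg1 i j) (fun i => hg2 i j)
    refine (Finset.sum_le_sum fun j _ => this j).trans ?_
    rw [Finset.sum_const, Finset.card_range, nsmul_eq_mul]
    apply le_of_eq
    ring
  · refine (edge_card_le S f).trans ?_
    have hinj : S.card ≤ (Finset.range m ×ˢ (Finset.range l ×ˢ (Finset.univ : Finset X))).card := by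
      let ix : X → ℕ := fun x => sInf {i | x ∈ N i}
      have hix : ∀ i x, x ∈ N i → ix x ≤ i ∧ x ∈ N (ix x) := fun i x hx =>
        ⟨Nat.sInf_le hx, Nat.sInf_mem (s := {i | x ∈ N i}) ⟨i, hx⟩⟩
      apply Finset.card_le_card_of_injOn (fun q => (q.2.1, q.1 - ix q.2.2, q.2.2))
      · rintro ⟨i, j, x⟩ hq
        simp only [S, Finset.coe_filter, Finset.mem_product, Finset.mem_range, Finset.mem_univ, and_true,
          Finset.mem_sdiff, Set.mem_setOf_eq] at hq
        obtain ⟨⟨hi, hj⟩, hxN, hxB⟩ := hq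
        obtain ⟨h1, h2⟩ := hix i x hxN
        simp only [Finset.coe_product, Set.mem_prod, Finset.mem_coe, Finset.mem_range, Finset.mem_univ, and_true]
        refine ⟨hj, ?_⟩
        by_contra hcon
        apply hxB
        have hli : l ≤ i := by omega
        simp only [Base, if_pos hli]
        exact hmono (by omega : ix x ≤ i - l) h2
      · rintro ⟨i, j, x⟩ hq ⟨i', j', x'⟩ hq' heq
        simp only [S, Finset.coe_filter, Finset.mem_product, Finset.mem_range, Finset.mem_univ, and_true,
          Finset.mem_sdiff, Set.mem_setOf_eq] at hq hq'
        simp only [Prod.mk.injEq] at heq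
        obtain ⟨rfl, h2, rfl⟩ := heq
        have a1 := (hix i x hq.2.1).1
        have a2 := (hix i' x hq'.2.1).1
        have : i = i' := by omega
        rw [this]
    refine hinj.trans (le_of_eq ?_)
    simp

end GraphPart2

lemma IsSpanner.mono {X : Type} [MetricSpace X] {H : SimpleGraph X} {c d : ℝ} (h : IsSpanner H c)
    (hcd : c ≤ d) : IsSpanner H d := fun u v =>
  ⟨(h u v).1, (h u v).2.trans (mul_le_mul_of_nonneg_right hcd dist_nonneg)⟩

lemma trivial_spanner {X : Type} [MetricSpace X] [Fintype X] (h : Fintype.card X ≤ 1) (c : ℝ) :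
    ∃ H : SimpleGraph X, IsSpanner H c ∧ graphWeight H = 0 ∧ edgeCount H = 0 := by
  haveI : Subsingleton X := Fintype.card_le_one_iff_subsingleton.mp h
  refine ⟨⊥, isSpanner_of_walks fun x y => ?_, ?_, ?_⟩
  · obtain rfl := Subsingleton.elim x y
    exact ⟨SimpleGraph.Walk.nil, by rw [walkWeight_nil, dist_self]; simp⟩
  · simp [graphWeight]
  · simp [edgeCount]

lemma clog_bound (n : ℕ) (hn : 2 ≤ n) : (Nat.clog 2 n : ℝ) + 2 ≤ 8 * Real.log n := by
  have hn' : (2:ℝ) ≤ n := by exact_mod_cast hn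
  have h2 : Real.log 2 ≤ Real.log n := Real.log_le_log (by norm_num) hn'
  have hl2 := Real.log_two_gt_d9
  have h1 := Nat.pow_pred_clog_lt_self (b := 2) (by norm_num) (x := n) (by omega)
  have hpos : 0 < Nat.clog 2 n := Nat.clog_pos (by norm_num) hn
  obtain ⟨k, hk⟩ : ∃ k, Nat.clog 2 n = k + 1 := ⟨Nat.clog 2 n - 1, by omega⟩
  rw [hk] at h1 ⊢
  simp only [Nat.pred_eq_sub_one, Nat.add_sub_cancel] at h1
  have h3 : ((2:ℝ)) ^ k ≤ n := by exact_mod_cast h1.le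
  have h4 := Real.log_le_log (by positivity) h3
  rw [Real.log_pow] at h4
  push_cast
  have h5 : (k:ℝ) * 0.5 ≤ k * Real.log 2 := by
    apply mul_le_mul_of_nonneg_left _ (by positivity); linarith
  linarith

lemma l_bound (K t : ℝ) (hK : 1 ≤ K) (hKt : K ≤ t) (hlam : 1 ≤ Real.log t) :
    ∃ l : ℕ, 16 * (2 * (K * t)) < 2 ^ l ∧ (l : ℝ) ≤ 13 * Real.log t := by
  have ht : 1 ≤ t := hK.trans hKt
  have hKt1 : 1 ≤ K * t := one_le_mul_of_one_le_of_one_le hK ht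
  obtain ⟨k, hk1, hk2⟩ := exists_nat_pow_near (x := 16 * (2 * (K * t))) (y := (2:ℝ)) (by linarith) one_lt_two
  refine ⟨k + 1, hk2, ?_⟩
  have hl2 := Real.log_two_gt_d9
  have hl2' := Real.log_two_lt_d9
  have h4 := Real.log_le_log (by positivity) hk1
  have e : 16 * (2 * (K * t)) = 2 ^ 5 * (K * t) := by ring
  rw [e, Real.log_pow, Real.log_mul (by positivity) (by positivity), Real.log_pow,
    Real.log_mul (by positivity) (by positivity)] at h4
  have h6 := Real.log_le_log (by linarith) hKt
  have h5 : (k:ℝ) * 0.5 ≤ k * Real.log 2 := by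
    apply mul_le_mul_of_nonneg_left _ (by positivity); linarith
  push_cast at h4 ⊢
  linarith

lemma exp_bound (A K t p L : ℝ) (hp1 : 1 < p) (hA : 0 < A) (hK : 1 ≤ K) (hKA : 8 * A ≤ K)
    (ht : 1 ≤ t) (hlam : 1 ≤ Real.log t) (hL : 0 ≤ L) :
    4 * A ≤ (K * t) ^ p ∧
      2 * A * (2 * L + 4) / (K * t) ^ p ≤ L * (Real.log t ^ 2 / t ^ p / 2) + 1 := by
  have hP : 1 ≤ t ^ p := Real.one_le_rpow ht (by linarith)
  have hKp : 8 * A ≤ K ^ p := hKA.trans (Real.self_le_rpow_of_one_le hK hp1.le)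
  rw [Real.mul_rpow (by linarith) (by linarith)]
  have h1 : 8 * A * t ^ p ≤ K ^ p * t ^ p := by gcongr
  have h0 : 8 * A ≤ 8 * A * t ^ p := le_mul_of_one_le_right (by positivity) hP
  refine ⟨by linarith, ?_⟩
  have h2 : 2 * A * (2 * L + 4) / (K ^ p * t ^ p) ≤ 2 * A * (2 * L + 4) / (8 * A * t ^ p) := by
    gcongr
  refine h2.trans ?_
  have e : 2 * A * (2 * L + 4) / (8 * A * t ^ p) = L * (1 / t ^ p / 2) + 1 / t ^ p := by
    field_simp; ring
  rw [e]
  have h3 : 1 / t ^ p ≤ 1 := by rw [div_le_one (by positivity)]; exact hP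
  have h4 : (1:ℝ) ≤ Real.log t ^ 2 := one_le_pow₀ hlam
  gcongr

/-- For every constant `p ∈ (1,2)`, every set of `n` points in `ℓ_p` and
every sufficiently large `t > 1`, there is an `O(t)`-spanner with lightness
`O((t^{1+p}/log² t)·n^{(log² t)/t^p}·log n)` and `O(n^{1+(log² t)/t^p}·log n·log t)` edges. -/
theorem lp_light_spanner (p : ℝ) (hp1 : 1 < p) (hp2 : p < 2)
    [Fact (1 ≤ ENNReal.ofReal p)] :
    ∃ (C t₀ : ℝ), 0 < C ∧ 1 < t₀ ∧
      ∀ t : ℝ, t₀ ≤ t →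
      ∀ s : Finset (lp (fun _ : ℕ => ℝ) (ENNReal.ofReal p)),
        ∃ H : SimpleGraph ↥s,
          IsSpanner H (C * t) ∧
          graphWeight H ≤
            C * (t ^ (1 + p) / Real.log t ^ 2) *
              (s.card : ℝ) ^ (Real.log t ^ 2 / t ^ p) * Real.log s.card * mstWeight ↥s ∧
          (edgeCount H : ℝ) ≤
            C * (s.card : ℝ) ^ (1 + Real.log t ^ 2 / t ^ p) *
              Real.log s.card * Real.log t := by
  obtain ⟨A, hA, hcover⟩ := lp_cover p hp1 hp2
  set K : ℝ := max 1 (8 * A) with hKdef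
  have hK : 1 ≤ K := le_max_left _ _
  have hKA : 8 * A ≤ K := le_max_right _ _
  refine ⟨51200 * K, Real.exp 1 + K, by positivity, by have := Real.exp_pos 1; linarith, fun t ht s => ?_⟩
  have he := Real.exp_pos 1
  have htK : K ≤ t := by linarith
  have ht1 : 1 ≤ t := hK.trans htK
  have ht0 : 0 < t := by linarith
  have hlam : 1 ≤ Real.log t := by
    rw [Real.le_log_iff_exp_le ht0]; linarith
  by_cases hs : 2 ≤ s.card
  swap
  · obtain ⟨H, h1, h2, h3⟩ := trivial_spanner (X := ↥s) (by rw [Fintype.card_coe]; omega) (51200 * K * t)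
    have hlog : Real.log (s.card : ℝ) = 0 := by
      have : s.card = 0 ∨ s.card = 1 := by omega
      rcases this with h | h <;> simp [h]
    exact ⟨H, h1, by rw [h2, hlog]; simp, by rw [h3, hlog]; simp⟩
  have hn2 : (2:ℝ) ≤ s.card := by exact_mod_cast hs
  have hn0 : (0:ℝ) < s.card := by linarith
  set L := Real.log s.card with hL
  have hLlow : 0.5 ≤ L := by
    have h2 : Real.log 2 ≤ Real.log s.card := Real.log_le_log (by norm_num) hn2
    have := Real.log_two_gt_d9
    rw [hL]; linarith
  obtain ⟨hb1, hb2⟩ := exp_bound A K t p L hp1 hA hK hKA ht1 hlam (by linarith)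
  have hP : 0 < t ^ p := by positivity
  set a := Real.log t ^ 2 / t ^ p with ha
  have ha0 : 0 < a := by positivity
  set E := Real.exp (L * (a / 2)) with hE
  have hE1 : L * (a / 2) + 1 ≤ E := Real.add_one_le_exp _
  have hE0 : 1 ≤ E := by
    have : 0 ≤ L * (a / 2) := by positivity
    linarith
  have hEE : (s.card : ℝ) ^ a = E * E := by
    rw [Real.rpow_def_of_pos hn0, hE, ← Real.exp_add]; congr 1; ring
  have hexp : Real.exp (2 * A * (2 * L + 4) / (K * t) ^ p) ≤ 3 * E := by
    refine (Real.exp_le_exp.mpr hb2).trans ?_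
    rw [Real.exp_add, mul_comm]
    have := Real.exp_one_lt_d9
    gcongr
    linarith
  set y := 2 * L * (8 * Real.exp (2 * A * (2 * L + 4) / (K * t) ^ p)) with hy
  have hy0 : 0 ≤ y := by positivity
  have hyb : y ≤ 48 * (L * E) := by
    have : y ≤ 2 * L * (8 * (3 * E)) := by rw [hy]; gcongr
    linarith
  set m := ⌊y⌋₊ + 1 with hm
  have hmy : y < m := by rw [hm]; push_cast; exact Nat.lt_floor_add_one y
  have hmb : (m : ℝ) ≤ 50 * (L * E) := by
    have h1 : (m : ℝ) ≤ y + 1 := by rw [hm]; push_cast; linarith [Nat.floor_le hy0]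
    have h2 : 0.5 ≤ L * E := by nlinarith
    linarith
  have hKt : 1 ≤ K * t := one_le_mul_of_one_le_of_one_le hK ht1
  obtain ⟨l, hl1, hl2⟩ := l_bound K t hK htK hlam
  obtain ⟨H, h1, h2, h3⟩ := graph_part (X := ↥s) (by rw [Fintype.card_coe]; exact hs) (2 * (K * t))
    (by linarith) m l hl1 (fun Δ hΔ => by
      obtain ⟨h, hh1, hh2⟩ := hcover s hs (K * t) (by linarith) hb1 m hmy Δ hΔ
      exact ⟨h, fun j x y hxy => (hh1 j x y hxy).trans (le_of_eq (by ring)), hh2⟩)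
  rw [Fintype.card_coe] at h2 h3
  have hD : 0 < mstWeight ↥s := mst_pos (by rw [Fintype.card_coe]; exact hs)
  refine ⟨H, h1.mono (by nlinarith), ?_, ?_⟩
  · have hcl := clog_bound s.card hs
    rw [← hL] at hcl
    have hLE : L ≤ 2 / a * E := by
      rw [div_mul_eq_mul_div, le_div_iff₀ ha0]; linarith
    have hta : t ^ (1 + p) / Real.log t ^ 2 = t / a := by
      rw [Real.rpow_add ht0, Real.rpow_one, ha]; field_simp
    rw [hta, hEE]
    calc graphWeight H ≤ m * (32 * (2 * (K * t)) * mstWeight ↥s * (Nat.clog 2 s.card + 2)) := h2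
      _ ≤ (50 * (L * E)) * (32 * (2 * (K * t)) * mstWeight ↥s * (8 * L)) := by gcongr
      _ ≤ (50 * (L * E)) * (32 * (2 * (K * t)) * mstWeight ↥s * (8 * (2 / a * E))) := by gcongr
      _ = 51200 * K * (t / a) * (E * E) * L * mstWeight ↥s := by ring
  · rw [Real.rpow_add hn0, Real.rpow_one, hEE]
    have hc : (edgeCount H : ℝ) ≤ m * (l * s.card) := by exact_mod_cast h3
    calc (edgeCount H : ℝ) ≤ m * (l * s.card) := hc
      _ ≤ (50 * (L * E)) * ((13 * Real.log t) * s.card) := by gcongr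
      _ = 650 * 1 * (s.card * (E * 1)) * L * Real.log t := by ring
      _ ≤ 51200 * K * (s.card * (E * E)) * L * Real.log t := by
        gcongr
        norm_num
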